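/- arXiv:1709.03268 — 5 statements merged into one kernel-verified Lean document; each statement's English description precedes it below -/
import Mathlib

section
/- Every regular sequence is selflinked: if x_1,...,x_n is an M-regular sequence on a finitely generated module M over a commutative Noetherian ring R, then the ideals a = (x_1,...,x_n) and a itself are linked by I = (x_1^2, x_2,...,x_n) over M, i.e., IM :_M a = aM. -/
open RingTheory.Sequence

/-- The colon submodule `N :_M a = {m ∈ M | a m ⊆ N}`. -/
def Submodule.colonBy {R M : Type*} [CommRing R] [AddCommGroup M] [Module R M]
    (N : Submodule R M) (a : Ideal R) : Submodule R M :=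
  ⨅ r ∈ a, N.comap (LinearMap.lsmul R M r)
/-- `a` and `b` are linked by `I` over `M`: `I ⊆ a ∩ b` is generated by an `M`-regular
sequence, `aM ≠ M ≠ bM`, `IM :_M a = bM` and `IM :_M b = aM`. -/
def Ideal.LinkedBy (R M : Type*) [CommRing R] [AddCommGroup M] [Module R M]
    (a b I : Ideal R) : Prop :=
  I ≤ a ⊓ b ∧
  (∃ rs : List R, I = Ideal.ofList rs ∧ RingTheory.Sequence.IsRegular M rs) ∧
  a • (⊤ : Submodule R M) ≠ ⊤ ∧ b • (⊤ : Submodule R M) ≠ ⊤ ∧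
  (I • ⊤ : Submodule R M).colonBy a = b • (⊤ : Submodule R M) ∧
  (I • ⊤ : Submodule R M).colonBy b = a • (⊤ : Submodule R M)

/-! More generally, if `x, x₂, …, xₙ` and `y, x₂, …, xₙ` are both `M`-regular, then the ideals they
generate are linked by `(x * y, x₂, …, xₙ)`. Although regular sequences cannot be permuted freely,
the first element `x` is always regular modulo `N = (x₂, …, xₙ)M`, because the exact sequence
`0 → M → M → M ⧸ xM` stays exact modulo a sequence that is weakly regular on its last term. Hence
`x` can be cancelled in `(xyM + N) :_M x = yM + N`, which yields both the colon submodules and the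
regularity of `x * y, x₂, …, xₙ`. -/

open scoped Pointwise

section Cancellation

variable {R M : Type*} [CommRing R] [AddCommGroup M] [Module R M] {x y r : R}
  {N : Submodule R M} {m : M}

theorem mem_smul_top_sup_iff : m ∈ r • (⊤ : Submodule R M) ⊔ N ↔ ∃ w, m - r • w ∈ N := by
  constructor
  · intro hm
    obtain ⟨_, ⟨w, -, rfl⟩, n, hn, rfl⟩ := Submodule.mem_sup.mp hm
    exact ⟨w, by simpa using hn⟩
  · rintro ⟨w, hw⟩
    exact Submodule.mem_sup.mpr
      ⟨r • w, Submodule.smul_mem_pointwise_smul _ _ _ trivial, m - r • w, hw, add_sub_cancel _ _⟩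

theorem smul_mem_mul_smul_top_sup_iff (hx : IsSMulRegular (M ⧸ N) x) :
    x • m ∈ (x * y) • (⊤ : Submodule R M) ⊔ N ↔ m ∈ y • (⊤ : Submodule R M) ⊔ N := by
  rw [mem_smul_top_sup_iff, mem_smul_top_sup_iff]
  simp only [mul_smul, ← smul_sub]
  exact exists_congr fun _ ↦ ⟨mem_of_isSMulRegular_quotient_of_smul_mem hx, N.smul_mem x⟩

theorem isSMulRegular_quotient_mul_smul_top_sup (hx : IsSMulRegular (M ⧸ N) x)
    (hrx : IsSMulRegular (M ⧸ x • (⊤ : Submodule R M) ⊔ N) r)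
    (hry : IsSMulRegular (M ⧸ y • (⊤ : Submodule R M) ⊔ N) r) :
    IsSMulRegular (M ⧸ (x * y) • (⊤ : Submodule R M) ⊔ N) r := by
  rw [isSMulRegular_quotient_iff_mem_of_smul_mem]
  intro m hrm
  obtain ⟨v, hv⟩ := mem_smul_top_sup_iff.mp hrm
  have hm : m ∈ x • (⊤ : Submodule R M) ⊔ N :=
    mem_of_isSMulRegular_quotient_of_smul_mem hrx
      (mem_smul_top_sup_iff.mpr ⟨y • v, by rwa [smul_smul]⟩)
  obtain ⟨w, hw⟩ := mem_smul_top_sup_iff.mp hm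
  have hN : N ≤ (x * y) • (⊤ : Submodule R M) ⊔ N := le_sup_right
  have hrw : x • r • w ∈ (x * y) • (⊤ : Submodule R M) ⊔ N := by
    rw [smul_comm, ← sub_sub_cancel (r • m) (r • x • w), ← smul_sub]
    exact sub_mem hrm (Submodule.smul_mem _ r (hN hw))
  have hxw : x • w ∈ (x * y) • (⊤ : Submodule R M) ⊔ N :=
    (smul_mem_mul_smul_top_sup_iff hx).mpr <|
      mem_of_isSMulRegular_quotient_of_smul_mem hry ((smul_mem_mul_smul_top_sup_iff hx).mp hrw)
  exact (Submodule.sub_mem_iff_left _ hxw).mp (hN hw)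

end Cancellation

section WeaklyRegular

variable {R M : Type*} [CommRing R] [AddCommGroup M] [Module R M] {x y : R} {xs : List R}

theorem isSMulRegular_head_quotient_tail (h : IsWeaklyRegular M (x :: xs)) :
    IsSMulRegular (M ⧸ (Ideal.ofList xs • ⊤ : Submodule R M)) x := by
  rw [isWeaklyRegular_cons_iff] at h
  obtain ⟨hx, hxs⟩ := h
  have hzero : Function.Exact (0 : M →ₗ[R] M) (LinearMap.lsmul R M x) :=
    (LinearMap.exact_zero_iff_injective M _).mpr hx
  have hmul : Function.Exact (LinearMap.lsmul R M x) (x • ⊤ : Submodule R M).mkQ := by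
    rw [LinearMap.exact_iff, Submodule.ker_mkQ, LinearMap.range_eq_map]
    rfl
  have hquot := map_first_exact_on_four_term_right_exact_of_isSMulRegular_last
    hzero hmul (Submodule.mkQ_surjective _) hxs
  rw [Submodule.mapQ_zero] at hquot
  exact (LinearMap.exact_zero_iff_injective _ _).mp hquot

theorem isWeaklyRegular_mul_cons (hx : IsWeaklyRegular M (x :: xs))
    (hy : IsWeaklyRegular M (y :: xs)) : IsWeaklyRegular M (x * y :: xs) := by
  induction xs using List.reverseRecOn with
  | nil =>
    rw [isWeaklyRegular_singleton_iff] at hx hy ⊢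
    exact hx.mul hy
  | append_singleton xs r ih =>
    simp only [← List.cons_append, isWeaklyRegular_append_iff, isWeaklyRegular_singleton_iff]
      at hx hy ⊢
    refine ⟨ih hx.1 hy.1, ?_⟩
    rw [Ideal.ofList_cons_smul] at hx hy ⊢
    exact isSMulRegular_quotient_mul_smul_top_sup (isSMulRegular_head_quotient_tail hx.1) hx.2 hy.2

end WeaklyRegular

section Linkage

variable {R : Type*} [CommRing R]

theorem ofList_mul_cons_le_left (x y : R) (xs : List R) :
    Ideal.ofList (x * y :: xs) ≤ Ideal.ofList (x :: xs) := by
  rw [Ideal.ofList_cons, Ideal.ofList_cons]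
  exact sup_le_sup_right (Ideal.span_singleton_le_span_singleton.mpr (dvd_mul_right x y)) _

theorem ofList_mul_cons_le_right (x y : R) (xs : List R) :
    Ideal.ofList (x * y :: xs) ≤ Ideal.ofList (y :: xs) :=
  mul_comm x y ▸ ofList_mul_cons_le_left y x xs

theorem ofList_cons_mul_ofList_cons_le (x y : R) (xs : List R) :
    Ideal.ofList (x :: xs) * Ideal.ofList (y :: xs) ≤ Ideal.ofList (x * y :: xs) := by
  rw [Ideal.ofList_cons, Ideal.ofList_cons, Ideal.ofList_cons, Ideal.sup_mul, Ideal.mul_sup,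
    Ideal.span_singleton_mul_span_singleton]
  exact sup_le (sup_le_sup_left Ideal.mul_le_right _) (le_sup_of_le_right Ideal.mul_le_left)

variable {M : Type*} [AddCommGroup M] [Module R M]

theorem mem_colonBy {N : Submodule R M} {a : Ideal R} {m : M} :
    m ∈ N.colonBy a ↔ ∀ r ∈ a, r • m ∈ N := by
  simp [Submodule.colonBy]

theorem smul_le_colonBy_of_mul_le {a b c : Ideal R} {N : Submodule R M} (h : a * b ≤ c) :
    b • N ≤ (c • N).colonBy a := by
  intro m hm
  refine mem_colonBy.mpr fun r hr ↦ Submodule.smul_mono_left h ?_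
  rw [Submodule.mul_smul]
  exact Submodule.smul_mem_smul hr hm

variable {x : R} {xs : List R}

theorem colonBy_ofList_mul_cons (hx : IsWeaklyRegular M (x :: xs)) (y : R) :
    (Ideal.ofList (x * y :: xs) • ⊤ : Submodule R M).colonBy (Ideal.ofList (x :: xs)) =
      Ideal.ofList (y :: xs) • (⊤ : Submodule R M) := by
  refine le_antisymm (fun m hm ↦ ?_)
    (smul_le_colonBy_of_mul_le (ofList_cons_mul_ofList_cons_le x y xs))
  have hxm := mem_colonBy.mp hm x (Ideal.subset_span List.mem_cons_self)
  rw [Ideal.ofList_cons_smul] at hxm ⊢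
  exact (smul_mem_mul_smul_top_sup_iff (isSMulRegular_head_quotient_tail hx)).mp hxm

theorem isRegular_mul_cons {y : R} (hx : IsRegular M (x :: xs))
    (hy : IsWeaklyRegular M (y :: xs)) : IsRegular M (x * y :: xs) where
  toIsWeaklyRegular := isWeaklyRegular_mul_cons hx.toIsWeaklyRegular hy
  top_ne_smul := (ne_top_of_le_ne_top hx.top_ne_smul.symm
    (Submodule.smul_mono_left (ofList_mul_cons_le_left x y xs))).symm

theorem regular_sequence_selflinked_general {y : R} (hx : IsRegular M (x :: xs))
    (hy : IsRegular M (y :: xs)) :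
    Ideal.LinkedBy R M (Ideal.ofList (x :: xs)) (Ideal.ofList (y :: xs))
      (Ideal.ofList (x * y :: xs)) := by
  have hcolon := colonBy_ofList_mul_cons hy.toIsWeaklyRegular x
  rw [mul_comm] at hcolon
  exact ⟨le_inf (ofList_mul_cons_le_left x y xs) (ofList_mul_cons_le_right x y xs),
    ⟨_, rfl, isRegular_mul_cons hx hy.toIsWeaklyRegular⟩,
    hx.top_ne_smul.symm, hy.top_ne_smul.symm,
    colonBy_ofList_mul_cons hx.toIsWeaklyRegular y, hcolon⟩

end Linkage

/-- Every `M`-regular sequence `x₁, …, xₙ` is selflinked: the ideal `a = (x₁, …, xₙ)`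
is linked to itself by `I = (x₁², x₂, …, xₙ)` over `M`; in particular `IM :_M a = aM`. -/
theorem regular_sequence_selflinked {R M : Type*} [CommRing R] [AddCommGroup M] [Module R M]
    [IsNoetherianRing R] [Module.Finite R M]
    (x : R) (xs : List R) (hreg : RingTheory.Sequence.IsRegular M (x :: xs)) :
    Ideal.LinkedBy R M (Ideal.ofList (x :: xs)) (Ideal.ofList (x :: xs))
      (Ideal.ofList (x ^ 2 :: xs)) ∧
    ((Ideal.ofList (x ^ 2 :: xs)) • ⊤ : Submodule R M).colonBy (Ideal.ofList (x :: xs)) =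
      (Ideal.ofList (x :: xs)) • (⊤ : Submodule R M) := by
  have hlinked := sq x ▸ regular_sequence_selflinked_general hreg hreg
  exact ⟨hlinked, hlinked.2.2.2.2.1⟩
end

section
/- If a and b are linked by I over M, then Supp(M/IM) = Supp(M/aM) ∪ Supp(M/bM). -/
open RingTheory.Sequence

/-!
Since `a` kills `bM ⧸ IM`, we have `abM ⊆ IM ⊆ aM ∩ bM`, so it suffices that
`Supp (M ⧸ abM) ⊆ Supp (M ⧸ aM) ∪ Supp (M ⧸ bM)`. Locally at a prime outside the right-hand side,
`M = aM` and `M = bM`, hence `M = abM`.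
-/

section

variable {R M : Type*} [CommRing R] [AddCommGroup M] [Module R M]
  {a : Ideal R} {N P : Submodule R M} {p : PrimeSpectrum R}

theorem le_colonBy_iff_smul_le : P ≤ N.colonBy a ↔ a • P ≤ N := by
  simp only [Submodule.colonBy, le_iInf_iff, Submodule.smul_le]
  rfl

theorem support_quotient_anti (h : N ≤ P) :
    Module.support R (M ⧸ P) ⊆ Module.support R (M ⧸ N) :=
  Module.support_subset_of_surjective _ (Submodule.factor_surjective h)

theorem notMem_support_quotient_iff :
    p ∉ Module.support R (M ⧸ N) ↔ ∀ m : M, ∃ r ∉ p.asIdeal, r • m ∈ N := by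
  simp only [Module.notMem_support_iff', (Submodule.mkQ_surjective N).forall, Submodule.mkQ_apply,
    ← Submodule.Quotient.mk_smul, Submodule.Quotient.mk_eq_zero]

theorem exists_smul_mem_smul_of_notMem_support_quotient
    (hp : p ∉ Module.support R (M ⧸ N)) {m : M} (hm : m ∈ a • (⊤ : Submodule R M)) :
    ∃ r ∉ p.asIdeal, r • m ∈ a • N := by
  induction hm using Submodule.smul_induction_on' with
  | smul s hs x _ =>
    obtain ⟨r, hr, hrx⟩ := notMem_support_quotient_iff.1 hp x
    exact ⟨r, hr, smul_comm r s x ▸ Submodule.smul_mem_smul hs hrx⟩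
  | add x _ y _ hx hy =>
    obtain ⟨r, hr, hrx⟩ := hx
    obtain ⟨t, ht, hty⟩ := hy
    refine ⟨r * t, p.2.mul_notMem hr ht, ?_⟩
    rw [smul_add, mul_smul r t y, mul_comm r t, mul_smul t r x]
    exact add_mem (Submodule.smul_mem _ t hrx) (Submodule.smul_mem _ r hty)

theorem support_quotient_ideal_smul (a : Ideal R) (N : Submodule R M) :
    Module.support R (M ⧸ a • N) =
      Module.support R (M ⧸ a • (⊤ : Submodule R M)) ∪ Module.support R (M ⧸ N) := by
  refine Set.Subset.antisymm (fun p hp => ?_) (Set.union_subset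
    (support_quotient_anti (smul_mono_right a le_top))
    (support_quotient_anti Submodule.smul_le_right))
  contrapose! hp
  obtain ⟨hpa, hpN⟩ := not_or.1 hp
  refine notMem_support_quotient_iff.2 fun m => ?_
  obtain ⟨r, hr, hrm⟩ := notMem_support_quotient_iff.1 hpa m
  obtain ⟨t, ht, htrm⟩ := exists_smul_mem_smul_of_notMem_support_quotient hpN hrm
  exact ⟨t * r, p.2.mul_notMem ht hr, by rwa [mul_smul]⟩

theorem support_quot_eq_of_linked_general (hNa : N ≤ a • ⊤) (hNP : N ≤ P)
    (hP : P ≤ N.colonBy a) :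
    Module.support R (M ⧸ N) =
      Module.support R (M ⧸ (a • ⊤ : Submodule R M)) ∪ Module.support R (M ⧸ P) := by
  apply Set.Subset.antisymm
  · rw [← support_quotient_ideal_smul]
    exact support_quotient_anti (le_colonBy_iff_smul_le.1 hP)
  · exact Set.union_subset (support_quotient_anti hNa) (support_quotient_anti hNP)

end

/-- If `a` and `b` are linked by `I` over `M`, then
`Supp (M/IM) = Supp (M/aM) ∪ Supp (M/bM)`. -/
theorem support_quot_eq_of_linked {R M : Type*} [CommRing R] [IsNoetherianRing R]
    [AddCommGroup M] [Module R M] [Module.Finite R M]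
    (a b I : Ideal R) (h : Ideal.LinkedBy R M a b I) :
    Module.support R (M ⧸ (I • ⊤ : Submodule R M)) =
      Module.support R (M ⧸ (a • ⊤ : Submodule R M)) ∪
        Module.support R (M ⧸ (b • ⊤ : Submodule R M)) := by
  obtain ⟨hI, -, -, -, hb, -⟩ := h
  exact support_quot_eq_of_linked_general (Submodule.smul_mono_left (hI.trans inf_le_left))
    (Submodule.smul_mono_left (hI.trans inf_le_right)) hb.ge
end

section
/- Let (R, m) be a local ring, and suppose a and b are linked by I over M with every associated prime of M/IM minimal. Then M/IM is Artinian if and only if M/aM is Artinian, if and only if M/bM is Artinian; moreover, if these hold, then aM ∩ bM ≠ IM. -/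
open RingTheory.Sequence

/-!
For finitely generated `b`, the module `M ⧸ (N :_M b)` embeds into a finite power of `M ⧸ N`, so its
associated primes are associated primes of `M ⧸ N`. If it is nonzero and Artinian over a local ring,
then `𝔪` is thus associated to `M ⧸ N`; incomparability makes it the only associated prime, and
`M ⧸ N` is Artinian. Conversely, if `M ⧸ N` is nonzero and Artinian, then `𝔪` is associated to it,
and a socle element lies outside `N` but inside `N :_M (a + b) = (N :_M a) ∩ (N :_M b)`.
-/

open IsLocalRing

section

variable {R M : Type*} [CommRing R] [AddCommGroup M] [Module R M]

theorem mem_colonBy_iff_le_colon {N : Submodule R M} {a : Ideal R} {x : M} :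
    x ∈ N.colonBy a ↔ a ≤ N.colon {x} := by
  simp only [Submodule.colonBy, Submodule.mem_iInf, Submodule.mem_comap, LinearMap.lsmul_apply,
    SetLike.le_def, Submodule.mem_colon_singleton]

theorem le_colonBy (N : Submodule R M) (a : Ideal R) : N ≤ N.colonBy a := fun _ hx ↦
  mem_colonBy_iff_le_colon.mpr fun r _ ↦ Submodule.mem_colon_singleton.mpr (N.smul_mem r hx)

theorem colonBy_sup (N : Submodule R M) (a b : Ideal R) :
    N.colonBy (a ⊔ b) = N.colonBy a ⊓ N.colonBy b := by
  ext x
  simp only [Submodule.mem_inf, mem_colonBy_iff_le_colon, sup_le_iff]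

theorem colonBy_span_colon_singleton (N : Submodule R M) (s : Finset R) (x : M) :
    (N.colonBy (Ideal.span s)).colon {x} = s.inf fun r ↦ N.colon {r • x} := by
  ext t
  simp only [Submodule.mem_colon_singleton, mem_colonBy_iff_le_colon, Ideal.span_le,
    Set.subset_def, SetLike.mem_coe, Submodule.mem_finsetInf, smul_comm t]

theorem associatedPrimes_quotient (N : Submodule R M) :
    associatedPrimes R (M ⧸ N) = N.associatedPrimes := by
  have colon_mkQ (x : M) : (⊥ : Submodule R (M ⧸ N)).colon {N.mkQ x} = N.colon {x} := by
    ext r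
    rw [Submodule.mem_colon_singleton, Submodule.mem_colon_singleton, Submodule.mem_bot,
      ← map_smul, Submodule.mkQ_apply, Submodule.Quotient.mk_eq_zero]
  ext p
  rw [AssociatedPrimes.mem_iff, IsAssociatedPrime, Submodule.AssociatePrimes.mem_iff,
    Submodule.isAssociatedPrime_def, Submodule.isAssociatedPrime_def, N.mkQ_surjective.exists]
  simp only [colon_mkQ]

theorem associatedPrimes_colonBy_subset (N : Submodule R M) {b : Ideal R} (hb : b.FG) :
    (N.colonBy b).associatedPrimes ⊆ N.associatedPrimes := by
  obtain ⟨s, rfl⟩ := hb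
  rintro p ⟨hp, x, hpx⟩
  have p_eq_inf : p = s.inf fun r ↦ (N.colon {r • x}).radical := by
    rw [hpx, colonBy_span_colon_singleton, ← Ideal.radicalInfTopHom_apply, map_finset_inf]
    rfl
  obtain ⟨r, -, hr⟩ := Ideal.eq_inf_of_isPrime_inf (p_eq_inf ▸ hp)
  exact ⟨hp, r • x, p_eq_inf.trans hr.symm⟩

theorem lt_colonBy_of_le_associatedPrime [IsNoetherianRing R] {N : Submodule R M} {a p : Ideal R}
    (hp : p ∈ N.associatedPrimes) (hap : a ≤ p) : N < N.colonBy a := by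
  obtain ⟨hp, x, rfl⟩ := Submodule.isAssociatedPrime_iff.mp hp
  refine lt_of_le_of_ne (le_colonBy N a) fun hN ↦ hp.ne_top ?_
  have hx : x ∈ N := hN ▸ mem_colonBy_iff_le_colon.mpr hap
  rwa [Ideal.eq_top_iff_one, Submodule.mem_colon_singleton, one_smul]

theorem isMaximal_of_mem_associatedPrimes_of_isArtinian [IsArtinian R M] {p : Ideal R}
    (hp : p ∈ associatedPrimes R M) : p.IsMaximal := by
  obtain ⟨hp, x, hpx⟩ := hp
  let f : R →ₗ[R] M := LinearMap.toSpanSingleton R M x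
  have ker_le : LinearMap.ker f ≤ p := fun r hr ↦
    hpx ▸ Ideal.le_radical (Submodule.mem_colon_singleton.mpr hr)
  have : IsArtinian R (R ⧸ LinearMap.ker f) :=
    isArtinian_of_linearEquiv f.quotKerEquivRange.symm
  have : IsArtinian R (R ⧸ p) := isArtinian_of_surjective _ _ (Submodule.factor_surjective ker_le)
  have : IsArtinianRing (R ⧸ p) := isArtinian_of_tower R this
  exact Ideal.Quotient.maximal_of_isField p (IsArtinianRing.isField_of_isDomain _)

theorem isArtinian_of_forall_associatedPrimes_isMaximal [IsNoetherianRing R] [Module.Finite R M]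
    (h : ∀ p ∈ associatedPrimes R M, p.IsMaximal) : IsArtinian R M := by
  let J := Module.annihilator R M
  have : Ring.KrullDimLE 0 (R ⧸ J) :=
    Ideal.krullDimLE_zero_quotient_iff_forall_minimalPrimes_isMaximal.mpr fun p hp ↦
      h p (Module.associatedPrimes.minimalPrimes_annihilator_subset_associatedPrimes R M hp)
  have : IsArtinianRing (R ⧸ J) := IsNoetherianRing.isArtinianRing_of_krullDimLE_zero
  let : Module (R ⧸ J) M := (Module.isTorsionBySet_annihilator R M).module
  have : IsScalarTower R (R ⧸ J) M := (Module.isTorsionBySet_annihilator R M).isScalarTower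
  have : Module.Finite (R ⧸ J) M := .of_restrictScalars_finite R _ _
  exact isArtinian_of_surjective_algebraMap (R := R ⧸ J) Ideal.Quotient.mk_surjective

variable [IsNoetherianRing R] [IsLocalRing R]

theorem maximalIdeal_mem_associatedPrimes_of_isArtinian_quotient {N : Submodule R M} (hN : N ≠ ⊤)
    [IsArtinian R (M ⧸ N)] : maximalIdeal R ∈ N.associatedPrimes := by
  have := Submodule.Quotient.nontrivial_iff.mpr hN
  obtain ⟨p, hp⟩ := associatedPrimes.nonempty R (M ⧸ N)
  rwa [← associatedPrimes_quotient,
    ← eq_maximalIdeal (isMaximal_of_mem_associatedPrimes_of_isArtinian hp)]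

theorem isArtinian_quotient_iff_isArtinian_quotient_colonBy [Module.Finite R M]
    {N : Submodule R M} {b : Ideal R} (hNb : N.colonBy b ≠ ⊤)
    (hN : IsAntichain (· ≤ ·) N.associatedPrimes) :
    IsArtinian R (M ⧸ N) ↔ IsArtinian R (M ⧸ N.colonBy b) := by
  refine ⟨fun _ ↦ isArtinian_of_surjective _ _ (Submodule.factor_surjective (le_colonBy N b)),
    fun _ ↦ isArtinian_of_forall_associatedPrimes_isMaximal fun p hp ↦ ?_⟩
  have maximalIdeal_mem : maximalIdeal R ∈ N.associatedPrimes :=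
    associatedPrimes_colonBy_subset N (IsNoetherian.noetherian b)
      (maximalIdeal_mem_associatedPrimes_of_isArtinian_quotient hNb)
  rw [associatedPrimes_quotient] at hp
  rw [hN.eq hp maximalIdeal_mem (le_maximalIdeal hp.1.ne_top)]
  exact maximalIdeal.isMaximal R

theorem lt_colonBy_inf_colonBy_of_isArtinian_quotient {N : Submodule R M} (hN : N ≠ ⊤)
    {a b : Ideal R} (ha : a ≠ ⊤) (hb : b ≠ ⊤) [IsArtinian R (M ⧸ N)] :
    N < N.colonBy a ⊓ N.colonBy b := by
  rw [← colonBy_sup]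
  exact lt_colonBy_of_le_associatedPrime
    (maximalIdeal_mem_associatedPrimes_of_isArtinian_quotient hN)
    (sup_le (le_maximalIdeal ha) (le_maximalIdeal hb))

end

theorem artinian_tfae_of_linked_general {R M : Type*} [CommRing R] [IsNoetherianRing R]
    [IsLocalRing R] [AddCommGroup M] [Module R M] [Module.Finite R M]
    {a b : Ideal R} (ha : a ≠ ⊤) (hb : b ≠ ⊤) {N : Submodule R M}
    (hNa : N.colonBy a ≠ ⊤) (hNb : N.colonBy b ≠ ⊤)
    (hN : IsAntichain (· ≤ ·) (associatedPrimes R (M ⧸ N))) :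
    (IsArtinian R (M ⧸ N) ↔ IsArtinian R (M ⧸ N.colonBy a)) ∧
      (IsArtinian R (M ⧸ N.colonBy a) ↔ IsArtinian R (M ⧸ N.colonBy b)) ∧
      (IsArtinian R (M ⧸ N) → N.colonBy a ⊓ N.colonBy b ≠ N) := by
  rw [associatedPrimes_quotient] at hN
  have iff_a := isArtinian_quotient_iff_isArtinian_quotient_colonBy hNa hN
  have iff_b := isArtinian_quotient_iff_isArtinian_quotient_colonBy hNb hN
  refine ⟨iff_a, iff_a.symm.trans iff_b, fun _ ↦ ?_⟩
  have hN_top : N ≠ ⊤ := ne_top_of_le_ne_top hNa (le_colonBy N a)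
  exact (lt_colonBy_inf_colonBy_of_isArtinian_quotient hN_top ha hb).ne'

/-- Over a local ring, if `a` and `b` are linked by `I` over `M` and every associated
prime of `M/IM` is minimal, then Artinianness of `M/IM`, `M/aM` and `M/bM` are
equivalent; moreover if they hold then `aM ∩ bM ≠ IM`. -/
theorem artinian_tfae_of_linked {R M : Type*} [CommRing R] [IsNoetherianRing R] [IsLocalRing R]
    [AddCommGroup M] [Module R M] [Module.Finite R M]
    (a b I : Ideal R) (h : Ideal.LinkedBy R M a b I)
    (hmin : ∀ p ∈ associatedPrimes R (M ⧸ (I • ⊤ : Submodule R M)),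
      ∀ q ∈ associatedPrimes R (M ⧸ (I • ⊤ : Submodule R M)), q ≤ p → q = p) :
    (IsArtinian R (M ⧸ (I • ⊤ : Submodule R M)) ↔
        IsArtinian R (M ⧸ (a • ⊤ : Submodule R M))) ∧
      (IsArtinian R (M ⧸ (a • ⊤ : Submodule R M)) ↔
        IsArtinian R (M ⧸ (b • ⊤ : Submodule R M))) ∧
      (IsArtinian R (M ⧸ (I • ⊤ : Submodule R M)) →
        (a • ⊤ : Submodule R M) ⊓ (b • ⊤ : Submodule R M) ≠ I • ⊤) := by
  obtain ⟨-, -, ha, hb, hIa, hIb⟩ := h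
  rw [← hIa, ← hIb]
  exact artinian_tfae_of_linked_general (N := I • ⊤) (a := b) (b := a)
    (by rintro rfl; simp at hb) (by rintro rfl; simp at ha)
    (hIb ▸ ha) (hIa ▸ hb) fun p hp q hq hne hle ↦ hne (hmin q hq p hp hle)
end

section
/- Let S be a Gorenstein local ring and c an ideal of S of pure height 0, i.e., every associated prime p of S/c satisfies ht p = 0. Then 0 :_S (0 :_S c) = c. -/
universe u

open CategoryTheory in
/-- A module has finite injective dimension if there is `n` such that
`Ext^i(N, M) = 0` for all modules `N` and all `i > n`. -/
def Module.HasFiniteInjDim (R M : Type u) [CommRing R] [AddCommGroup M] [Module R M] : Prop :=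
  ∃ n : ℕ, ∀ (N : ModuleCat.{u} R) (i : ℕ), n < i →
    Subsingleton (((Ext R (ModuleCat.{u} R) i).obj (Opposite.op N)).obj (ModuleCat.of R M))

/-- A Noetherian local ring is Gorenstein if it has finite injective dimension
as a module over itself. -/
def IsGorensteinLocalRing (S : Type u) [CommRing S] [IsLocalRing S] [IsNoetherianRing S] :
    Prop :=
  Module.HasFiniteInjDim S S

/-!
An ideal of a Noetherian ring is determined by its localizations at its associated primes, and
annihilators of finitely generated ideals commute with localization; so it suffices to treat
`S_p` for `p` a minimal prime. Finite injective dimension passes to `S_p`, which has dimension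
zero. Over a zero-dimensional Noetherian ring `A` every prime `p` is associated to `A`, so `A ⧸ p`
embeds in `A`, and the long exact sequence moves the vanishing of `Ext` into a fixed module from
degree `i + 1` down to degree `i`. Hence `A` is injective over itself. Since its maximal ideals
have nonzero annihilators, linear functionals to `A` separate the points of `A ⧸ I`, and such a
functional is multiplication by an element of the annihilator of `I`.
-/

section Annihilator

variable {A : Type*} [CommRing A]

theorem bot_colonBy_eq_annihilator (I : Ideal A) :
    (⊥ : Ideal A).colonBy I = Submodule.annihilator I := by
  ext x
  simp [Submodule.colonBy, Submodule.mem_annihilator, mul_comm]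

theorem le_annihilator_annihilator (I : Ideal A) : I ≤ I.annihilator.annihilator :=
  Submodule.le_annihilator_iff.2 (Submodule.mul_annihilator I)

theorem exists_linearMap_self_apply_ne_zero {M : Type*} [AddCommGroup M] [Module A M]
    (hA : Module.Baer A A) (hmax : ∀ m : Ideal A, m.IsMaximal → m.annihilator ≠ ⊥)
    {x : M} (hx : x ≠ 0) : ∃ f : M →ₗ[A] A, f x ≠ 0 := by
  let φ : A →ₗ[A] M := LinearMap.toSpanSingleton A M x
  obtain ⟨m, hm, hφm⟩ := Ideal.exists_le_maximal φ.ker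
    ((Ideal.ne_top_iff_one _).2 (by simpa [φ]))
  obtain ⟨z, hz, hz0⟩ := Submodule.exists_mem_ne_zero_of_ne_bot (hmax m hm)
  have hker : φ.ker ≤ (LinearMap.toSpanSingleton A A z).ker := fun a ha ↦ by
    simpa [mul_comm] using Submodule.mem_annihilator.1 hz a (hφm ha)
  obtain ⟨f, hf⟩ := hA.extension_property (φ.ker.liftQ φ le_rfl)
    (LinearMap.ker_eq_bot.1 (Submodule.ker_liftQ_eq_bot' _ _ rfl)) (φ.ker.liftQ _ hker)
  have hfx : f x = z := by
    have hf_mk_one := congr($hf (φ.ker.mkQ 1))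
    rwa [LinearMap.comp_apply, Submodule.mkQ_apply, Submodule.liftQ_apply, Submodule.liftQ_apply,
      LinearMap.toSpanSingleton_apply_one, LinearMap.toSpanSingleton_apply_one] at hf_mk_one
  exact ⟨f, hfx ▸ hz0⟩

theorem annihilator_annihilator_of_baer (hA : Module.Baer A A)
    (hmax : ∀ m : Ideal A, m.IsMaximal → m.annihilator ≠ ⊥) (I : Ideal A) :
    I.annihilator.annihilator = I := by
  refine le_antisymm (fun x hx ↦ ?_) (le_annihilator_annihilator I)
  by_contra hxI
  obtain ⟨f, hf⟩ := exists_linearMap_self_apply_ne_zero hA hmax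
    (x := I.mkQ x) (by simpa [Ideal.Quotient.eq_zero_iff_mem] using hxI)
  have hfmk (a : A) : f (I.mkQ a) = a * f (I.mkQ 1) := by
    rw [← smul_eq_mul, ← map_smul, ← map_smul, smul_eq_mul, mul_one]
  have hf1 : f (I.mkQ 1) ∈ I.annihilator := Submodule.mem_annihilator.2 fun r hr ↦ by
    rw [smul_eq_mul, mul_comm, ← hfmk, Submodule.mkQ_apply, (Submodule.Quotient.mk_eq_zero I).2 hr,
      map_zero]
  exact hf (hfmk x ▸ Submodule.mem_annihilator.1 hx _ hf1)

end Annihilator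

section Localization

variable {R : Type*} [CommRing R]

theorem map_annihilator_le {A : Type*} [CommRing A] (f : R →+* A) (I : Ideal R) :
    I.annihilator.map f ≤ (I.map f).annihilator := by
  rw [Submodule.le_annihilator_iff, smul_eq_mul, ← Ideal.map_mul, Submodule.annihilator_mul,
    Ideal.map_bot]

theorem annihilator_map_of_fg (M : Submonoid R) (A : Type*) [CommRing A] [Algebra R A]
    [IsLocalization M A] {I : Ideal R} (hI : I.FG) :
    (I.map (algebraMap R A)).annihilator = I.annihilator.map (algebraMap R A) := by
  refine le_antisymm ?_ (map_annihilator_le _ I)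
  induction I, hI using Submodule.fg_induction with
  | singleton x =>
    intro y hy
    obtain ⟨a, s, rfl⟩ := IsLocalization.exists_mk'_eq M y
    rw [← Ideal.span, Ideal.map_span, Set.image_singleton,
      Submodule.mem_annihilator_span_singleton, smul_eq_mul, mul_comm,
      IsLocalization.mul_mk'_eq_mk'_of_mul, IsLocalization.mk'_eq_zero_iff] at hy
    obtain ⟨t, ht⟩ := hy
    rw [IsLocalization.mk'_mem_map_algebraMap_iff M]
    refine ⟨t, t.2, (Submodule.mem_annihilator_span_singleton x _).2 ?_⟩
    rw [smul_eq_mul, mul_assoc, mul_comm a, ht]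
  | sup I J _ _ hI hJ =>
    rw [← Submodule.add_eq_sup, Ideal.add_eq_sup, Ideal.map_sup, Submodule.annihilator_sup,
      Submodule.annihilator_sup, IsLocalization.map_inf M]
    exact inf_le_inf hI hJ

variable [IsNoetherianRing R]

theorem mem_of_forall_algebraMap_mem_map_associatedPrimes {I : Ideal R} {x : R}
    (h : ∀ p : associatedPrimes R (R ⧸ I), algebraMap R (Localization.AtPrime p.1) x ∈
      I.map (algebraMap R (Localization.AtPrime p.1))) : x ∈ I := by
  by_contra hx
  obtain ⟨p, hp, hle⟩ := exists_le_isAssociatedPrime_of_isNoetherianRing R (I.mkQ x)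
    (by simpa [Ideal.Quotient.eq_zero_iff_mem] using hx)
  have := hp.isPrime
  obtain ⟨s, hs, hsx⟩ :=
    (IsLocalization.algebraMap_mem_map_algebraMap_iff p.primeCompl _ I x).1 (h ⟨p, hp⟩)
  refine hs (hle ?_)
  rw [Submodule.mem_colon_singleton, Submodule.mem_bot, ← map_smul]
  exact (Submodule.Quotient.mk_eq_zero I).2 hsx

theorem annihilator_annihilator_of_localization (I : Ideal R)
    (h : ∀ p : associatedPrimes R (R ⧸ I),
      (I.map (algebraMap R (Localization.AtPrime p.1))).annihilator.annihilator =
        I.map (algebraMap R (Localization.AtPrime p.1))) :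
    I.annihilator.annihilator = I := by
  refine le_antisymm (fun x hx ↦ ?_) (le_annihilator_annihilator I)
  refine mem_of_forall_algebraMap_mem_map_associatedPrimes fun p ↦ ?_
  rw [← h p, annihilator_map_of_fg p.1.primeCompl _ (IsNoetherian.noetherian I)]
  exact map_annihilator_le _ _ (Ideal.mem_map_of_mem _ hx)

end Localization

section Ext

open CategoryTheory Abelian

theorem subsingleton_ext_succ_of_subsingleton_derived_ext {R : Type*} [Ring R] {C : Type*}
    [Category* C] [Abelian C] [Linear R C] [EnoughProjectives C] [HasExt C] {X Y : C} {n : ℕ}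
    (h : Subsingleton (((_root_.Ext R C (n + 1)).obj (Opposite.op X)).obj Y)) :
    Subsingleton (Ext X Y (n + 1)) := by
  refine subsingleton_of_forall_eq 0 fun α ↦ ?_
  let P := ProjectiveResolution.of X
  obtain ⟨f, hf, rfl⟩ := P.extMk_surjective α (n + 2) rfl
  rw [P.extMk_eq_zero_iff f (n + 2) rfl hf n rfl]
  have hexact : (P.complex.linearYonedaObj R Y).ExactAt (n + 1) := by
    rw [HomologicalComplex.exactAt_iff_isZero_homology]
    exact (ModuleCat.isZero_of_subsingleton _).of_iso (P.isoExt (n + 1) Y).symm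
  rw [HomologicalComplex.exactAt_iff' _ n (n + 1) (n + 2) (by simp) (by simp),
    ShortComplex.moduleCat_exact_iff] at hexact
  exact hexact f hf

section ShortExact

variable {C : Type*} [Category* C] [Abelian C] [HasExt C] {T : ShortComplex C} (hT : T.ShortExact)
  {Y : C} {n : ℕ}

include hT

theorem subsingleton_ext_X₁ [Subsingleton (Ext T.X₂ Y n)] [Subsingleton (Ext T.X₃ Y (n + 1))] :
    Subsingleton (Ext T.X₁ Y n) := by
  refine subsingleton_of_forall_eq 0 fun α ↦ ?_
  obtain ⟨β, rfl⟩ := Ext.contravariant_sequence_exact₁ hT Y α (add_comm 1 n)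
    (Subsingleton.elim _ _)
  rw [Subsingleton.elim β 0, Ext.comp_zero]

theorem subsingleton_ext_X₂ [Subsingleton (Ext T.X₁ Y n)] [Subsingleton (Ext T.X₃ Y n)] :
    Subsingleton (Ext T.X₂ Y n) := by
  refine subsingleton_of_forall_eq 0 fun α ↦ ?_
  obtain ⟨β, rfl⟩ := Ext.contravariant_sequence_exact₂ hT Y α (Subsingleton.elim _ _)
  rw [Subsingleton.elim β 0, Ext.comp_zero]

end ShortExact

variable {R : Type u} [CommRing R]

theorem hasInjectiveDimensionLE_of_hasFiniteInjDim {M : Type u} [AddCommGroup M]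
    [Module R M] (h : Module.HasFiniteInjDim R M) :
    ∃ n, HasInjectiveDimensionLE (ModuleCat.of R M) n :=
  h.imp fun n hn ↦ hasInjectiveDimensionLT_of_enoughProjectives _ (n + 1) fun N ↦
    subsingleton_ext_succ_of_subsingleton_derived_ext (hn N (n + 1) n.lt_succ_self)

theorem baer_of_subsingleton_ext_one_quotient (M : ModuleCat.{u} R)
    (h : ∀ I : Ideal R, Subsingleton (Ext (ModuleCat.of R (R ⧸ I)) M 1)) : Module.Baer R M := by
  intro I g
  let T := ModuleCat.shortComplexOfCompEqZero I.subtype I.mkQ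
    (LinearMap.exact_subtype_mkQ I).linearMap_comp_eq_zero
  have hT : T.ShortExact := ModuleCat.shortComplex_shortExact T (LinearMap.exact_subtype_mkQ I)
    I.injective_subtype I.mkQ_surjective
  obtain ⟨φ, hφ⟩ := Ext.contravariant_sequence_exact₁ hT M (Ext.mk₀ (ModuleCat.ofHom g))
    (add_comm 1 0) ((h I).elim _ _)
  obtain ⟨φ, rfl⟩ := Ext.homEquiv₀.symm.surjective φ
  have hext : T.f ≫ φ = ModuleCat.ofHom g := Ext.homEquiv₀.symm.injective (by simpa using hφ)
  exact ⟨φ.hom, fun x hx ↦ congr($(hext).hom ⟨x, hx⟩)⟩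

variable [IsNoetherianRing R]

theorem subsingleton_ext_of_forall_quotient_prime {Y : ModuleCat.{u} R} {n : ℕ}
    (h : ∀ p : Ideal R, p.IsPrime → Subsingleton (Ext (ModuleCat.of R (R ⧸ p)) Y n))
    (N : Type u) [AddCommGroup N] [Module R N] [hN : Module.Finite R N] :
    Subsingleton (Ext (ModuleCat.of R N) Y n) := by
  induction hN using IsNoetherianRing.induction_on_isQuotientEquivQuotientPrime R with
  | subsingleton N =>
    refine subsingleton_of_forall_eq 0 fun α ↦ ?_
    rw [← Ext.mk₀_id_comp α, (ModuleCat.isZero_of_subsingleton (ModuleCat.of R N)).eq_zero_of_src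
      (𝟙 _), Ext.mk₀_zero, Ext.zero_comp]
  | quotient N p e =>
    have := h p.asIdeal p.isPrime
    refine subsingleton_of_forall_eq 0 fun α ↦ ?_
    rw [← Ext.mk₀_id_comp α, ← e.toModuleIso.hom_inv_id, ← Ext.mk₀_comp_mk₀_assoc,
      Subsingleton.elim ((Ext.mk₀ e.toModuleIso.inv).comp α _) 0, Ext.comp_zero]
  | exact N₁ N₂ N₃ f g hf hg hfg h₁ h₃ =>
    exact subsingleton_ext_X₂ (ModuleCat.shortComplex_shortExact
      (ModuleCat.shortComplexOfCompEqZero f g hfg.linearMap_comp_eq_zero) hfg hf hg)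

theorem mem_associatedPrimes_self_of_krullDimLE_zero [Ring.KrullDimLE 0 R] (p : Ideal R)
    [p.IsPrime] : p ∈ associatedPrimes R R := by
  refine Module.associatedPrimes.minimalPrimes_annihilator_subset_associatedPrimes R R ?_
  rw [Module.annihilator_eq_bot.2 inferInstance]
  exact Ideal.mem_minimalPrimes_of_krullDimLE_zero p

theorem annihilator_ne_bot_of_mem_associatedPrimes_self {p : Ideal R}
    (hp : p ∈ associatedPrimes R R) : p.annihilator ≠ ⊥ := by
  obtain ⟨hprime, z, hz⟩ := isAssociatedPrime_iff.1 hp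
  refine (Submodule.ne_bot_iff _).2 ⟨z, Submodule.mem_annihilator.2 fun a ha ↦ ?_, ?_⟩
  · rw [hz, Submodule.mem_colon_singleton, Submodule.mem_bot] at ha
    rwa [smul_eq_mul, mul_comm]
  · rintro rfl
    exact hprime.ne_top (hz.trans Submodule.colon_singleton_zero)

theorem subsingleton_ext_quotient_of_mem_associatedPrimes_self {p : Ideal R}
    (hp : p ∈ associatedPrimes R R) {Y : ModuleCat.{u} R} {n : ℕ}
    (h : ∀ I : Ideal R, Subsingleton (Ext (ModuleCat.of R (R ⧸ I)) Y (n + 2))) :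
    Subsingleton (Ext (ModuleCat.of R (R ⧸ p)) Y (n + 1)) := by
  obtain ⟨-, f, hf⟩ := (isAssociatedPrime_iff_exists_injective_linearMap p R).1 hp
  let T := ModuleCat.shortComplexOfCompEqZero f f.range.mkQ
    f.exact_map_mkQ_range.linearMap_comp_eq_zero
  have hT : T.ShortExact := ModuleCat.shortComplex_shortExact T f.exact_map_mkQ_range hf
    f.range.mkQ_surjective
  have : Subsingleton (Ext T.X₂ Y (n + 1)) :=
    Ext.subsingleton_of_projective (ModuleCat.of R R) Y n
  have : Subsingleton (Ext T.X₃ Y (n + 1 + 1)) := h f.range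
  exact subsingleton_ext_X₁ hT

theorem baer_of_hasInjectiveDimensionLE_of_krullDimLE_zero [Ring.KrullDimLE 0 R]
    (Y : ModuleCat.{u} R) (n : ℕ) [HasInjectiveDimensionLE Y n] : Module.Baer R Y := by
  suffices h : ∀ k ≤ n, ∀ I : Ideal R, Subsingleton (Ext (ModuleCat.of R (R ⧸ I)) Y (k + 1)) from
    baer_of_subsingleton_ext_one_quotient Y (h 0 n.zero_le)
  intro k hk
  induction hk using Nat.decreasingInduction with
  | self => exact fun I ↦ HasInjectiveDimensionLT.subsingleton Y (n + 1) _ le_rfl _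
  | of_succ k _ ih =>
    exact fun I ↦ subsingleton_ext_of_forall_quotient_prime (fun p _ ↦
      subsingleton_ext_quotient_of_mem_associatedPrimes_self
        (mem_associatedPrimes_self_of_krullDimLE_zero p) ih) _

theorem hasInjectiveDimensionLE_localization_self (M : Submonoid R) {n : ℕ}
    [HasInjectiveDimensionLE (ModuleCat.of R R) n] :
    HasInjectiveDimensionLE (ModuleCat.of (Localization M) (Localization M)) n := by
  have h := (ModuleCat.of R R).localizedModule_hasInjectiveDimensionLE n M
  have : IsLocalizedModule M (M := R) ((ModuleCat.of R R).localizedModuleMkLinearMap M) :=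
    ModuleCat.localizedModule_isLocalizedModule _ _
  let e := LinearEquiv.extendScalarsOfIsLocalization M (Localization M)
    (IsLocalizedModule.linearEquiv M ((ModuleCat.of R R).localizedModuleMkLinearMap M)
      (Algebra.linearMap R (Localization M)))
  exact (ModuleCat.hasInjectiveDimensionLE_iff_of_linearEquiv e n).1 h

theorem annihilator_annihilator_of_hasInjectiveDimensionLE_of_krullDimLE_zero
    [Ring.KrullDimLE 0 R] {n : ℕ} [HasInjectiveDimensionLE (ModuleCat.of R R) n] (I : Ideal R) :
    I.annihilator.annihilator = I :=
  annihilator_annihilator_of_baer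
    (baer_of_hasInjectiveDimensionLE_of_krullDimLE_zero (ModuleCat.of R R) n)
    (fun m _ ↦ annihilator_ne_bot_of_mem_associatedPrimes_self
      (mem_associatedPrimes_self_of_krullDimLE_zero m)) I

end Ext

theorem double_annihilator_eq_general {S : Type u} [CommRing S] [IsNoetherianRing S]
    (hS : Module.HasFiniteInjDim S S) (c : Ideal S)
    (hpure : ∀ p, (hp : p ∈ associatedPrimes S (S ⧸ c)) →
      Order.height (⟨p, hp.1⟩ : PrimeSpectrum S) = 0) :
    (⊥ : Ideal S).colonBy ((⊥ : Ideal S).colonBy c) = c := by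
  obtain ⟨n, _⟩ := hasInjectiveDimensionLE_of_hasFiniteInjDim hS
  rw [bot_colonBy_eq_annihilator, bot_colonBy_eq_annihilator]
  refine annihilator_annihilator_of_localization c fun ⟨p, hp⟩ ↦ ?_
  have := hp.isPrime
  have hmin : p ∈ minimalPrimes S :=
    PrimeSpectrum.isMin_iff.1 (Order.height_eq_zero.1 (hpure p hp))
  have : Ring.KrullDimLE 0 (Localization.AtPrime p) := .of_isLocalization p hmin _
  have := hasInjectiveDimensionLE_localization_self p.primeCompl (n := n)
  have : IsNoetherianRing (Localization.AtPrime p) :=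
    IsLocalization.isNoetherianRing p.primeCompl _ inferInstance
  exact annihilator_annihilator_of_hasInjectiveDimensionLE_of_krullDimLE_zero (n := n) _

/-- In a Gorenstein local ring `S`, if every associated prime of `S/c` has height `0`,
then `0 :_S (0 :_S c) = c`. -/
theorem double_annihilator_eq {S : Type u} [CommRing S] [IsLocalRing S] [IsNoetherianRing S]
    (hS : IsGorensteinLocalRing S) (c : Ideal S)
    (hpure : ∀ p, (hp : p ∈ associatedPrimes S (S ⧸ c)) →
      Order.height (⟨p, hp.1⟩ : PrimeSpectrum S) = 0) :
    (⊥ : Ideal S).colonBy ((⊥ : Ideal S).colonBy c) = c :=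
  double_annihilator_eq_general hS c hpure
end

section
/- Let (R, m) be a Cohen-Macaulay local ring with canonical module ω_R, and let I ⊆ a ∩ b be an ideal generated by an R-regular sequence with a ≠ I, b ≠ I, and I :_R a = b (so a and b are linked by I over R). Then ω_R/a·ω_R is Cohen-Macaulay if and only if ω_R/a·ω_R is unmixed and R/b is Cohen-Macaulay. -/
universe u

open RingTheory.Sequence IsLocalRing

/-- The `M`-grade of an ideal `c`: the length of a maximal `M`-regular sequence
with entries in `c`. -/
noncomputable def Module.grade (R : Type*) [CommRing R] (c : Ideal R)
    (M : Type*) [AddCommGroup M] [Module R M] : ℕ :=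
  sSup {n | ∃ rs : List R, rs.length = n ∧ (∀ r ∈ rs, r ∈ c) ∧
    RingTheory.Sequence.IsRegular M rs}
/-- The dimension of a module: the Krull dimension of `R / ann M`. -/
noncomputable def Module.dim (R : Type*) [CommRing R]
    (M : Type*) [AddCommGroup M] [Module R M] : WithBot (WithTop ℕ) :=
  ringKrullDim (R ⧸ Module.annihilator R M)

/-- A module over a local ring is Cohen–Macaulay if its depth (the grade of the
maximal ideal) equals its dimension. -/
def Module.IsCM (R : Type*) [CommRing R] [IsLocalRing R]
    (M : Type*) [AddCommGroup M] [Module R M] : Prop :=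
  (Module.grade R (IsLocalRing.maximalIdeal R) M : WithBot (WithTop ℕ)) = Module.dim R M
/-- `N` is unmixed: `dim R/p = dim N` for every associated prime `p` of `N`. -/
def Module.IsUnmixed (R : Type*) [CommRing R] (N : Type*) [AddCommGroup N] [Module R N] :
    Prop :=
  ∀ p ∈ associatedPrimes R N, ringKrullDim (R ⧸ p) = Module.dim R N

/-- `ω` is a canonical module of the Cohen–Macaulay local ring `R`: finitely generated,
of finite injective dimension, maximal Cohen–Macaulay, and the natural map
`R → End(ω)` is bijective. -/
def IsCanonicalModule (R ω : Type u) [CommRing R] [IsLocalRing R] [IsNoetherianRing R]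
    [AddCommGroup ω] [Module R ω] : Prop :=
  Module.Finite R ω ∧ Module.HasFiniteInjDim R ω ∧
    (Module.grade R (maximalIdeal R) ω : WithBot (WithTop ℕ)) = ringKrullDim R ∧
    Function.Bijective (LinearMap.lsmul R ω)

/-!
Write `I = (rs)`, `W = ω/Iω`, `X = ω/aω` and `d = dim R/I`. On modules killed by `I`, Rees's theorem
identifies `Hom(-, W)` with `Ext^g(-, ω)`, where `g` is the length of `rs`; hence this functor
preserves maximal Cohen–Macaulay modules and is exact on sequences ending in one.
Moreover `End W = R/I`.

The kernel `aω/Iω` of `π : W → X` has annihilator `I : a = b`, so that restricting the scalar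
endomorphisms of `W` to it embeds `R/b` in `Hom(aω/Iω, W)`, with cokernel zero if `X` is
Cohen–Macaulay. Then `R/b` is isomorphic to the dual of a maximal Cohen–Macaulay module.
Conversely, if `R/b` is Cohen–Macaulay, the biduality map `X → Hom(Hom(X, W), W)` is surjective onto
a maximal Cohen–Macaulay module, and its kernel has zero dual. The associated primes of such a
kernel have dimension less than `d`, so the kernel vanishes when `X` is unmixed.
-/

namespace CanonicalLinkage

open CategoryTheory Abelian Pointwise

section ExtVanishing

variable {R : Type u} [CommRing R]

/-- Vanishing of `Ext^i(N, M)`, stated for unbundled modules. -/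
def ExtVanish (R : Type u) [CommRing R] (N M : Type u) [AddCommGroup N] [Module R N]
    [AddCommGroup M] [Module R M] (i : ℕ) : Prop :=
  Subsingleton (Ext (ModuleCat.of R N) (ModuleCat.of R M) i)

variable {A B C M N : Type u} [AddCommGroup A] [Module R A] [AddCommGroup B] [Module R B]
  [AddCommGroup C] [Module R C] [AddCommGroup M] [Module R M] [AddCommGroup N] [Module R N]

lemma extVanish_iff {i : ℕ} :
    ExtVanish R N M i ↔ ∀ z : Ext (ModuleCat.of R N) (ModuleCat.of R M) i, z = 0 :=
  ⟨fun h z ↦ h.elim z 0, subsingleton_of_forall_eq 0⟩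

lemma extVanish_zero_iff : ExtVanish R N M 0 ↔ Subsingleton (N →ₗ[R] M) :=
  (Ext.addEquiv₀.trans ModuleCat.homAddEquiv).subsingleton_congr

lemma ExtVanish.of_subsingleton_left [Subsingleton N] (i : ℕ) : ExtVanish R N M i := by
  have id_eq_zero : 𝟙 (ModuleCat.of R N) = 0 := by
    ext x
    exact Subsingleton.elim (α := N) _ _
  refine extVanish_iff.mpr fun z ↦ ?_
  rw [← Ext.mk₀_id_comp z, id_eq_zero, Ext.mk₀_zero, Ext.zero_comp]

lemma ExtVanish.of_subsingleton_right [Subsingleton M] (i : ℕ) : ExtVanish R N M i := by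
  have id_eq_zero : 𝟙 (ModuleCat.of R M) = 0 := by
    ext x
    exact Subsingleton.elim (α := M) _ _
  refine extVanish_iff.mpr fun z ↦ ?_
  rw [← Ext.comp_mk₀_id z, id_eq_zero, Ext.mk₀_zero, Ext.comp_zero]

lemma ExtVanish.of_projective [Module.Projective R N] (i : ℕ) : ExtVanish R N M (i + 1) := by
  have : Projective (ModuleCat.of R N) := inferInstance
  exact extVanish_iff.mpr fun z ↦ Ext.eq_zero_of_projective z

lemma ExtVanish.of_linearEquiv_left (e : A ≃ₗ[R] B) {i : ℕ} (h : ExtVanish R A M i) :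
    ExtVanish R B M i := by
  rw [extVanish_iff] at h ⊢
  intro z
  rw [← Ext.mk₀_id_comp z, ← e.toModuleIso.inv_hom_id, ← Ext.mk₀_comp_mk₀_assoc,
    h (Ext.comp _ z _), Ext.comp_zero]

lemma ExtVanish.of_linearEquiv_right (e : A ≃ₗ[R] B) {i : ℕ} (h : ExtVanish R N A i) :
    ExtVanish R N B i := by
  rw [extVanish_iff] at h ⊢
  intro z
  rw [← Ext.comp_mk₀_id z, ← e.toModuleIso.inv_hom_id, ← Ext.mk₀_comp_mk₀,
    ← Ext.comp_assoc_of_third_deg_zero, h (Ext.comp z _ _), Ext.zero_comp]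

section LongExactSequence

variable {f : A →ₗ[R] B} {g : B →ₗ[R] C}

lemma shortExact_of_exact (hf : Function.Injective f) (hg : Function.Surjective g)
    (hfg : Function.Exact f g) :
    (ModuleCat.shortComplexOfCompEqZero f g hfg.linearMap_comp_eq_zero).ShortExact where
  exact := ModuleCat.shortComplex_exact _ hfg
  mono_f := (ModuleCat.mono_iff_injective _).mpr hf
  epi_g := (ModuleCat.epi_iff_surjective _).mpr hg

variable (hf : Function.Injective f) (hg : Function.Surjective g) (hfg : Function.Exact f g)
  {i : ℕ}
include hf hg hfg

lemma ExtVanish.left_of_exact (hB : ExtVanish R B M i) (hC : ExtVanish R C M (i + 1)) :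
    ExtVanish R A M i := by
  rw [extVanish_iff] at *
  intro z
  obtain ⟨y, rfl⟩ := Ext.contravariant_sequence_exact₁ (shortExact_of_exact hf hg hfg) _ z
    (add_comm 1 i) (hC _)
  rw [hB y, Ext.comp_zero]

lemma ExtVanish.middle_of_exact (hA : ExtVanish R A M i) (hC : ExtVanish R C M i) :
    ExtVanish R B M i := by
  rw [extVanish_iff] at *
  intro z
  obtain ⟨y, rfl⟩ := Ext.contravariant_sequence_exact₂ (shortExact_of_exact hf hg hfg) _ z (hA _)
  rw [hC y, Ext.comp_zero]

lemma ExtVanish.right_of_exact (hA : ExtVanish R A M i) (hB : ExtVanish R B M (i + 1)) :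
    ExtVanish R C M (i + 1) := by
  rw [extVanish_iff] at *
  intro z
  obtain ⟨y, rfl⟩ := Ext.contravariant_sequence_exact₃ (shortExact_of_exact hf hg hfg) _ z
    (hB _) (add_comm 1 i)
  rw [hA y, Ext.comp_zero]

lemma ExtVanish.left_of_exact_covariant (hB : ExtVanish R N B (i + 1))
    (hC : ExtVanish R N C i) : ExtVanish R N A (i + 1) := by
  rw [extVanish_iff] at *
  intro z
  obtain ⟨y, rfl⟩ := Ext.covariant_sequence_exact₁ _ (shortExact_of_exact hf hg hfg) z (hB _) rfl
  rw [hC y, Ext.zero_comp]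

lemma ExtVanish.right_of_exact_covariant (hA : ExtVanish R N A (i + 1))
    (hB : ExtVanish R N B i) : ExtVanish R N C i := by
  rw [extVanish_iff] at *
  intro z
  obtain ⟨y, rfl⟩ := Ext.covariant_sequence_exact₃ _ (shortExact_of_exact hf hg hfg) z rfl (hA _)
  rw [hB y, Ext.zero_comp]

end LongExactSequence

section RegularElement

variable {x : R} {i : ℕ}

lemma shortExact_lsmul (hx : IsSMulRegular M x) :
    (ModuleCat.shortComplexOfCompEqZero (LinearMap.lsmul R M x) (Submodule.mkQ (x • ⊤))
      (LinearMap.exact_lsmul_mkQ_smul_top M x).linearMap_comp_eq_zero).ShortExact :=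
  shortExact_of_exact (f := LinearMap.lsmul R M x) hx (Submodule.mkQ_surjective _)
    (LinearMap.exact_lsmul_mkQ_smul_top M x)

lemma mk₀_lsmul_comp_ext {L : ModuleCat.{u} R} (x : R) (z : Ext (ModuleCat.of R M) L i) :
    (Ext.mk₀ (ModuleCat.ofHom (LinearMap.lsmul R M x))).comp z (zero_add i) = x • z := by
  have : ModuleCat.ofHom (LinearMap.lsmul R M x) = x • 𝟙 (ModuleCat.of R M) := rfl
  rw [this, Ext.mk₀_smul, Ext.smul_comp, Ext.mk₀_id_comp]

lemma ext_comp_mk₀_lsmul {L : ModuleCat.{u} R} (x : R) (z : Ext L (ModuleCat.of R M) i) :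
    z.comp (Ext.mk₀ (ModuleCat.ofHom (LinearMap.lsmul R M x))) (add_zero i) = x • z := by
  have : ModuleCat.ofHom (LinearMap.lsmul R M x) = x • 𝟙 (ModuleCat.of R M) := rfl
  rw [this, Ext.mk₀_smul, Ext.comp_smul, Ext.comp_mk₀_id]

lemma smul_ext_eq_zero_of_mem_annihilator {L : ModuleCat.{u} R}
    (hx : x ∈ Module.annihilator R M) (z : Ext (ModuleCat.of R M) L i) : x • z = 0 := by
  have : LinearMap.lsmul R M x = 0 := LinearMap.ext fun m ↦ Module.mem_annihilator.mp hx m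
  rw [← mk₀_lsmul_comp_ext, this, ModuleCat.ofHom_zero, Ext.mk₀_zero, Ext.zero_comp]

lemma le_annihilator_quotient_smul_top (I : Ideal R) :
    I ≤ Module.annihilator R (M ⧸ (I • ⊤ : Submodule R M)) :=
  fun _ hr ↦ Module.mem_annihilator.mpr <| (Submodule.mkQ_surjective _).forall.mpr fun _ ↦
    (Submodule.Quotient.mk_eq_zero _).mpr (Submodule.smul_mem_smul hr Submodule.mem_top)

lemma mem_annihilator_quotSMulTop : x ∈ Module.annihilator R (QuotSMulTop x M) :=
  Module.mem_annihilator.mpr <| (Submodule.mkQ_surjective _).forall.mpr fun _ ↦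
    (Submodule.Quotient.mk_eq_zero _).mpr
      (Submodule.smul_mem_pointwise_smul _ _ _ Submodule.mem_top)

lemma ExtVanish.quotSMulTop_left (hx : IsSMulRegular N x) (h : ExtVanish R N M i)
    (h' : ExtVanish R N M (i + 1)) : ExtVanish R (QuotSMulTop x N) M (i + 1) :=
  .right_of_exact (f := LinearMap.lsmul R N x) hx (Submodule.mkQ_surjective _)
    (LinearMap.exact_lsmul_mkQ_smul_top N x) h h'

lemma ExtVanish.quotSMulTop_right (hx : IsSMulRegular M x) (h : ExtVanish R N M i)
    (h' : ExtVanish R N M (i + 1)) : ExtVanish R N (QuotSMulTop x M) i :=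
  .right_of_exact_covariant (f := LinearMap.lsmul R M x) hx (Submodule.mkQ_surjective _)
    (LinearMap.exact_lsmul_mkQ_smul_top M x) h' h

lemma ExtVanish.quotOfList_left {rs : List R} (hrs : IsWeaklyRegular N rs) {s : ℕ}
    (h : ∀ i, s < i → ExtVanish R N M i) (hi : s + rs.length < i) :
    ExtVanish R (N ⧸ (Ideal.ofList rs • ⊤ : Submodule R N)) M i := by
  induction rs generalizing N s with
  | nil => exact (h i hi).of_linearEquiv_left (Submodule.quotEquivOfEqBot _ (by simp)).symm
  | cons x rs ih =>
    rw [isWeaklyRegular_cons_iff] at hrs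
    rw [List.length_cons] at hi
    refine (ih hrs.2 (s := s + 1) (fun j hj ↦ ?_) (by omega)).of_linearEquiv_left
      (Submodule.quotOfListConsSMulTopEquivQuotSMulTopInner N x rs).symm
    obtain ⟨j, rfl⟩ := Nat.exists_eq_succ_of_ne_zero (Nat.ne_zero_of_lt hj)
    exact .quotSMulTop_left hrs.1 (h j (by omega)) (h (j + 1) (by omega))

-- Nakayama's lemma: multiplication by `x` is surjective on `Ext^i(N, M)`.
lemma ExtVanish.of_quotSMulTop_left [IsLocalRing R] [IsNoetherianRing R] [Module.Finite R N]
    [Module.Finite R M] (hxm : x ∈ maximalIdeal R) (hx : IsSMulRegular N x)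
    (h : ExtVanish R (QuotSMulTop x N) M (i + 1)) : ExtVanish R N M i := by
  rw [extVanish_iff] at h
  have : Module.Finite R (Ext (ModuleCat.of R N) (ModuleCat.of R M) i) :=
    ModuleCat.finite_ext R (ModuleCat.of R N) (ModuleCat.of R M) i
  have top_le : (⊤ : Submodule R (Ext (ModuleCat.of R N) (ModuleCat.of R M) i)) ≤
      maximalIdeal R • ⊤ := by
    intro z _
    obtain ⟨y, rfl⟩ :=
      Ext.contravariant_sequence_exact₁ (shortExact_lsmul hx) _ z (add_comm 1 i) (h _)
    exact (mk₀_lsmul_comp_ext x y).symm ▸ Submodule.smul_mem_smul hxm Submodule.mem_top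
  have top_eq_bot := Submodule.eq_bot_of_le_smul_of_le_jacobson_bot (maximalIdeal R) ⊤
    Module.Finite.fg_top top_le (IsLocalRing.maximalIdeal_le_jacobson _)
  exact (Submodule.subsingleton_iff R).mp (subsingleton_iff_bot_eq_top.mp top_eq_bot.symm)

end RegularElement

end ExtVanishing

section Dimension

lemma isSMulRegular_quotient_of_notMem {R : Type*} [CommRing R] {p : Ideal R} [p.IsPrime] {x : R}
    (hxp : x ∉ p) :
    IsSMulRegular (R ⧸ p) x := by
  refine isSMulRegular_iff_right_eq_zero_of_smul.mpr fun y hy ↦ ?_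
  rw [Algebra.smul_def, mul_eq_zero] at hy
  exact hy.resolve_left fun h ↦ hxp (Ideal.Quotient.eq_zero_iff_mem.mp h)

lemma exists_natCast_of_add_natCast_eq {z : WithBot ℕ∞} {m n : ℕ} (h : z + m = n) :
    ∃ d : ℕ, z = d ∧ d + m = n := by
  induction z with
  | bot => exact absurd h.symm (WithBot.coe_ne_bot (a := (n : ℕ∞)))
  | coe z =>
    have h' : z + (m : ℕ∞) = n := by exact_mod_cast h
    induction z with
    | top => exact absurd h'.symm (ENat.natCast_ne_top n)
    | coe z => exact ⟨z, rfl, by exact_mod_cast h'⟩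

variable {R : Type u} [CommRing R] {M N : Type u} [AddCommGroup M] [Module R M]
  [AddCommGroup N] [Module R N]

lemma dim_eq_supportDim [Module.Finite R M] : Module.dim R M = Module.supportDim R M :=
  (Module.supportDim_eq_ringKrullDim_quotient_annihilator R M).symm

lemma nontrivial_of_supportDim_eq_natCast {d : ℕ} (h : Module.supportDim R M = d) :
    Nontrivial M :=
  (Module.supportDim_ne_bot_iff_nontrivial R M).mp (h ▸ WithBot.coe_ne_bot (a := (d : ℕ∞)))

lemma supportDim_le_of_annihilator_le [Module.Finite R M] [Module.Finite R N]
    (h : Module.annihilator R N ≤ Module.annihilator R M) :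
    Module.supportDim R M ≤ Module.supportDim R N := by
  rw [Module.supportDim_eq_ringKrullDim_quotient_annihilator R M,
    Module.supportDim_eq_ringKrullDim_quotient_annihilator R N]
  exact ringKrullDim_le_of_surjective (Ideal.Quotient.factor h) (Ideal.Quotient.factor_surjective h)

lemma annihilator_le_of_isAssociatedPrime {p : Ideal R} (hp : IsAssociatedPrime p M) :
    Module.annihilator R M ≤ p :=
  Submodule.annihilator_top.symm.trans_le hp.annihilator_le

lemma supportDim_quotient_le_of_annihilator_le [Module.Finite R M] {p : Ideal R}
    (hp : Module.annihilator R M ≤ p) : Module.supportDim R (R ⧸ p) ≤ Module.supportDim R M :=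
  supportDim_le_of_annihilator_le (hp.trans Ideal.annihilator_quotient.ge)

variable [IsLocalRing R] [IsNoetherianRing R] [Module.Finite R M]

lemma supportDim_quotient_add_one_le {x : R} (hx : IsSMulRegular M x) {p : Ideal R}
    [hprime : p.IsPrime] (hp : Module.annihilator R M ≤ p) (hxp : x ∈ p) :
    Module.supportDim R (R ⧸ p) + 1 ≤ Module.supportDim R M := by
  rw [← Module.supportDim_quotSMulTop_succ_eq_supportDim hx (le_maximalIdeal hprime.ne_top hxp)]
  have mem_support : (⟨p, hprime⟩ : PrimeSpectrum R) ∈ Module.support R (QuotSMulTop x M) := by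
    rw [Module.support_quotSMulTop]
    exact ⟨Module.mem_support_iff_of_finite.mpr hp, by simpa using hxp⟩
  have hle : Module.supportDim R (R ⧸ p) ≤ Module.supportDim R (QuotSMulTop x M) :=
    supportDim_quotient_le_of_annihilator_le (Module.annihilator_le_of_mem_support mem_support)
  exact add_le_add_left hle 1

end Dimension

section Depth

/-- The depth of the module `M` over the local ring `R` is at least `n`, expressed by the
vanishing of `Ext^i(k, M)` for `i < n`. The zero module has depth at least every `n`. -/
def DepthGE (R M : Type u) [CommRing R] [IsLocalRing R] [AddCommGroup M] [Module R M]
    (n : ℕ) : Prop :=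
  ∀ i < n, ExtVanish R (R ⧸ maximalIdeal R) M i

variable {R : Type u} [CommRing R] [IsLocalRing R]

section

variable {A B C M : Type u} [AddCommGroup A] [Module R A] [AddCommGroup B] [Module R B]
  [AddCommGroup C] [Module R C] [AddCommGroup M] [Module R M] {n : ℕ}

lemma DepthGE.of_linearEquiv (e : A ≃ₗ[R] B) (h : DepthGE R A n) : DepthGE R B n :=
  fun i hi ↦ (h i hi).of_linearEquiv_right e

lemma DepthGE.left_of_exact {f : A →ₗ[R] B} {g : B →ₗ[R] C} (hf : Function.Injective f)
    (hg : Function.Surjective g) (hfg : Function.Exact f g) (hB : DepthGE R B n)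
    (hC : DepthGE R C n) : DepthGE R A n := by
  rintro (_ | i) hi
  · have := extVanish_zero_iff.mp (hB 0 hi)
    exact extVanish_zero_iff.mpr
      (Function.Injective.subsingleton (f := (f ∘ₗ ·)) fun _ _ ↦ (LinearMap.cancel_left hf).mp)
  · exact .left_of_exact_covariant hf hg hfg (hB _ hi) (hC i (by omega))

lemma DepthGE.quotSMulTop {x : R} (hx : IsSMulRegular M x) (h : DepthGE R M (n + 1)) :
    DepthGE R (QuotSMulTop x M) n :=
  fun i hi ↦ .quotSMulTop_right hx (h i (by omega)) (h (i + 1) (by omega))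

lemma DepthGE.quotOfList {rs : List R} (hrs : IsWeaklyRegular M rs)
    (h : DepthGE R M (n + rs.length)) :
    DepthGE R (M ⧸ (Ideal.ofList rs • ⊤ : Submodule R M)) n := by
  induction rs generalizing M with
  | nil => exact h.of_linearEquiv (Submodule.quotEquivOfEqBot _ (by simp)).symm
  | cons x rs ih =>
    rw [isWeaklyRegular_cons_iff] at hrs
    exact (ih hrs.2 (h.quotSMulTop hrs.1)).of_linearEquiv
      (Submodule.quotOfListConsSMulTopEquivQuotSMulTopInner M x rs).symm

end

variable {M N : Type u} [AddCommGroup M] [Module R M] [AddCommGroup N] [Module R N]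
  [IsNoetherianRing R] [Module.Finite R M] {n : ℕ}

/-- Dévissage: a prime filtration of `N` reduces to `N = R/p`, and an element of the maximal ideal
outside `p` raises the degree by one. -/
lemma ExtVanish.of_residueField [hN : Module.Finite R N] {i : ℕ}
    (hk : ExtVanish R (R ⧸ maximalIdeal R) M i)
    (hquot : ∀ (p : Ideal R) [p.IsPrime], Module.annihilator R N ≤ p →
      ∀ x ∈ maximalIdeal R, x ∉ p → ExtVanish R (QuotSMulTop x (R ⧸ p)) M (i + 1)) :
    ExtVanish R N M i := by
  induction hN using IsNoetherianRing.induction_on_isQuotientEquivQuotientPrime R with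
  | subsingleton N => exact .of_subsingleton_left i
  | exact N₁ N₂ N₃ f g hf hg hfg ih₁ ih₃ =>
    exact .middle_of_exact hf hg hfg
      (ih₁ fun p _ hp ↦ hquot p ((f.annihilator_le_of_injective hf).trans hp))
      (ih₃ fun p _ hp ↦ hquot p ((g.annihilator_le_of_surjective hg).trans hp))
  | quotient N p e =>
    refine ExtVanish.of_linearEquiv_left e.symm ?_
    have := p.2
    obtain hp | hp := eq_or_ne p.1 (maximalIdeal R)
    · rwa [hp]
    · obtain ⟨x, hxm, hxp⟩ :=
        SetLike.exists_of_lt (lt_of_le_of_ne (le_maximalIdeal p.2.ne_top) hp)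
      have hNp : Module.annihilator R N ≤ p.1 := by
        rw [e.annihilator_eq, Ideal.annihilator_quotient]
      exact .of_quotSMulTop_left hxm (isSMulRegular_quotient_of_notMem hxp)
        (hquot p.1 hNp x hxm hxp)

/-- Ischebeck's theorem. -/
lemma DepthGE.extVanish_of_supportDim_le (hM : DepthGE R M n) [Module.Finite R N] {r i : ℕ}
    (hr : Module.supportDim R N ≤ r) (hi : i + r < n) : ExtVanish R N M i := by
  induction r generalizing N i with
  | zero =>
    refine .of_residueField (hM i (by omega)) fun p _ hp x hxm hxp ↦ ?_
    have hdim := (Module.supportDim_quotSMulTop_succ_eq_supportDim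
      (isSMulRegular_quotient_of_notMem hxp) hxm).trans_le ((supportDim_le_of_annihilator_le
        (hp.trans Ideal.annihilator_quotient.ge)).trans hr)
    rw [Nat.cast_zero, ENat.WithBot.add_one_le_zero_iff,
      Module.supportDim_eq_bot_iff_subsingleton] at hdim
    exact .of_subsingleton_left _
  | succ r ih =>
    refine .of_residueField (hM i (by omega)) fun p _ hp x hxm hxp ↦ ?_
    have hdim := (Module.supportDim_quotSMulTop_succ_eq_supportDim
      (isSMulRegular_quotient_of_notMem hxp) hxm).trans_le ((supportDim_le_of_annihilator_le
        (hp.trans Ideal.annihilator_quotient.ge)).trans hr)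
    rw [Nat.cast_succ, ENat.WithBot.add_le_add_one_right_iff] at hdim
    exact ih hdim (by omega)

lemma DepthGE.le_supportDim_quotient (hM : DepthGE R M n) {p : Ideal R}
    (hp : IsAssociatedPrime p M) : n ≤ Module.supportDim R (R ⧸ p) := by
  obtain ⟨hprime, f, hf⟩ := (isAssociatedPrime_iff_exists_injective_linearMap p M).mp hp
  by_contra! hlt
  obtain _ | n := n
  · rw [Nat.cast_zero, WithBot.lt_zero_iff_eq_bot, Module.supportDim_eq_bot_iff_subsingleton] at hlt
    exact hprime.ne_top (Ideal.Quotient.subsingleton_iff.mp hlt)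
  · rw [Nat.cast_succ, ENat.WithBot.lt_add_one_iff] at hlt
    have := extVanish_zero_iff.mp (hM.extVanish_of_supportDim_le hlt (i := 0) (by omega))
    have f_zero_eq_one : f 0 = f 1 := by rw [Subsingleton.elim f 0]; rfl
    exact hprime.ne_top (Ideal.Quotient.zero_eq_one_iff.mp (hf f_zero_eq_one))

lemma DepthGE.isUnmixed (hM : DepthGE R M n) (hdim : Module.supportDim R M = n) :
    Module.IsUnmixed R M := by
  intro p hp
  rw [dim_eq_supportDim, ← Module.supportDim_quotient_eq_ringKrullDim]
  exact le_antisymm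
    (supportDim_quotient_le_of_annihilator_le (annihilator_le_of_isAssociatedPrime hp))
    (hdim.trans_le (hM.le_supportDim_quotient hp))

/-- On a module of maximal depth, an element of an associated prime `p` cannot be regular on `N`,
since it would cut `dim N` down to below `dim R/p`. -/
lemma DepthGE.isWeaklyRegular [Module.Finite R N] (hM : DepthGE R M n)
    (hMN : Module.support R M ⊆ Module.support R N) (hN : Module.supportDim R N ≤ n)
    {rs : List R} (hrs : IsWeaklyRegular N rs) (hmem : ∀ r ∈ rs, r ∈ maximalIdeal R) :
    IsWeaklyRegular M rs := by
  induction rs generalizing M N n with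
  | nil => exact .nil R M
  | cons x rs ih =>
    rw [isWeaklyRegular_cons_iff] at hrs ⊢
    rw [List.forall_mem_cons] at hmem
    have hx : IsSMulRegular M x := by
      by_contra hx
      obtain ⟨p, hp, hxp⟩ : ∃ p ∈ associatedPrimes R M, x ∈ p := by
        have : x ∈ {r | IsSMulRegular M r}ᶜ := hx
        rw [← biUnion_associatedPrimes_eq_compl_regular] at this
        simpa using this
      have := hp.isPrime
      have mem_support : (⟨p, hp.isPrime⟩ : PrimeSpectrum R) ∈ Module.support R M :=
        Module.mem_support_iff_of_finite.mpr (annihilator_le_of_isAssociatedPrime hp)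
      have hlt := (supportDim_quotient_add_one_le hrs.1
        (Module.annihilator_le_of_mem_support (hMN mem_support)) hxp).trans hN
      exact (ENat.WithBot.add_one_le_natCast_iff.mp hlt).not_ge (hM.le_supportDim_quotient hp)
    have hsupp : Module.support R (QuotSMulTop x M) ⊆ Module.support R (QuotSMulTop x N) := by
      rw [Module.support_quotSMulTop, Module.support_quotSMulTop]
      gcongr
    have hdim := (Module.supportDim_quotSMulTop_succ_eq_supportDim hrs.1 hmem.1).trans_le hN
    refine ⟨hx, ?_⟩
    obtain _ | n := n
    · rw [Nat.cast_zero, ENat.WithBot.add_one_le_zero_iff] at hdim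
      exact ih (n := 0) (by simp [DepthGE]) hsupp (by simp [hdim]) hrs.2 hmem.2
    · rw [Nat.cast_succ, ENat.WithBot.add_le_add_one_right_iff] at hdim
      exact ih (hM.quotSMulTop hx) hsupp hdim hrs.2 hmem.2

end Depth

section RegularSequences

variable {R : Type u} [CommRing R] {L M : Type u} [AddCommGroup L] [Module R L]
  [AddCommGroup M] [Module R M]

lemma exists_comp_extClass_eq {x : R} (hx : IsSMulRegular M x)
    (hL : x ∈ Module.annihilator R L) {i : ℕ}
    (z : Ext (ModuleCat.of R L) (ModuleCat.of R M) (i + 1)) :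
    ∃ y : Ext (ModuleCat.of R L) (ModuleCat.of R (QuotSMulTop x M)) i,
      y.comp (shortExact_lsmul hx).extClass rfl = z :=
  Ext.covariant_sequence_exact₁ _ (shortExact_lsmul hx) z
    ((ext_comp_mk₀_lsmul x z).trans (smul_ext_eq_zero_of_mem_annihilator hL z)) rfl

lemma ExtVanish.of_le_annihilator {rs : List R} (hrs : IsWeaklyRegular M rs)
    (hL : Ideal.ofList rs ≤ Module.annihilator R L) {i : ℕ} (hi : i < rs.length) :
    ExtVanish R L M i := by
  induction rs generalizing M i with
  | nil => simp at hi
  | cons x rs ih =>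
    rw [isWeaklyRegular_cons_iff] at hrs
    rw [Ideal.ofList_cons, sup_le_iff, Ideal.span_singleton_le_iff_mem] at hL
    cases i with
    | zero =>
      refine extVanish_zero_iff.mpr (subsingleton_of_forall_eq 0 fun f ↦ LinearMap.ext fun l ↦
        hrs.1 ?_)
      simp [← map_smul, Module.mem_annihilator.mp hL.1 l]
    | succ i =>
      refine extVanish_iff.mpr fun z ↦ ?_
      obtain ⟨y, rfl⟩ := exists_comp_extClass_eq hrs.1 hL.1 z
      rw [extVanish_iff.mp (ih hrs.2 hL.2 (by simpa using hi)) y, Ext.zero_comp]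

variable [IsLocalRing R]

lemma depthGE_of_isWeaklyRegular {rs : List R} (hrs : IsWeaklyRegular M rs)
    (hmem : ∀ r ∈ rs, r ∈ maximalIdeal R) : DepthGE R M rs.length :=
  fun _ hi ↦ .of_le_annihilator hrs
    ((Ideal.span_le.mpr hmem).trans Ideal.annihilator_quotient.ge) hi

variable [IsNoetherianRing R] [Module.Finite R M] {n : ℕ}

lemma DepthGE.exists_isRegular [Nontrivial M] (h : DepthGE R M n) :
    ∃ rs : List R, rs.length = n ∧ (∀ r ∈ rs, r ∈ maximalIdeal R) ∧ IsRegular M rs := by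
  refine ModuleCat.exists_isRegular_of_exists_subsingleton_ext (maximalIdeal R) n
    (ModuleCat.of R M) ?_ (ModuleCat.of R (R ⧸ maximalIdeal R)) ?_ h
  · exact (Submodule.top_ne_ideal_smul_of_le_jacobson_annihilator
      (maximalIdeal_le_jacobson _)).symm.lt_top
  · rw [Module.support_eq_zeroLocus, Ideal.annihilator_quotient]

end RegularSequences

section InjectiveDimension

variable {R : Type u} [CommRing R] {M N : Type u} [AddCommGroup M] [Module R M]
  [AddCommGroup N] [Module R N]

/-- The injective dimension of `M` is at most `n`, tested on finite modules only. -/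
def InjDimLE (R M : Type u) [CommRing R] [AddCommGroup M] [Module R M] (n : ℕ) : Prop :=
  ∀ (N : Type u) [AddCommGroup N] [Module R N] [Module.Finite R N] (i : ℕ), n < i →
    ExtVanish R N M i

-- `CategoryTheory.Ext` is the derived functor of `Hom`, whereas `ExtVanish` is stated with
-- `CategoryTheory.Abelian.Ext`; both are computed by a projective resolution of `N`.
lemma ExtVanish.of_subsingleton_derived {i : ℕ}
    (h : Subsingleton (((Ext R (ModuleCat.{u} R) (i + 1)).obj
      (Opposite.op (ModuleCat.of R N))).obj (ModuleCat.of R M))) :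
    ExtVanish R N M (i + 1) := by
  let P := ProjectiveResolution.of (ModuleCat.of R N)
  refine extVanish_iff.mpr fun z ↦ ?_
  obtain ⟨f, hf, rfl⟩ := P.extMk_surjective z (i + 2) rfl
  rw [P.extMk_eq_zero_iff f (i + 2) rfl hf i rfl]
  have exactAt := (ModuleCat.isZero_of_subsingleton _).of_iso
    (P.isoExt (R := R) (i + 1) (ModuleCat.of R M)).symm
  rw [← HomologicalComplex.exactAt_iff_isZero_homology,
    HomologicalComplex.exactAt_iff' _ i (i + 1) (i + 2) (by simp) (by simp),
    ShortComplex.moduleCat_exact_iff] at exactAt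
  obtain ⟨g, hg⟩ := exactAt f hf
  exact ⟨g, hg⟩

lemma exists_injDimLE_of_hasFiniteInjDim (h : Module.HasFiniteInjDim R M) :
    ∃ n, InjDimLE R M n := by
  obtain ⟨n, hn⟩ := h
  refine ⟨n, fun N _ _ _ i hi ↦ ?_⟩
  obtain ⟨i, rfl⟩ := Nat.exists_eq_succ_of_ne_zero (Nat.ne_zero_of_lt hi)
  exact .of_subsingleton_derived (hn (ModuleCat.of R N) (i + 1) hi)

variable [IsLocalRing R] [IsNoetherianRing R] [Module.Finite R M] {n : ℕ}

lemma exists_injective_residueField_of_supportDim_eq_zero (hM : Module.supportDim R M = 0) :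
    ∃ f : (R ⧸ maximalIdeal R) →ₗ[R] M, Function.Injective f := by
  have := nontrivial_of_supportDim_eq_natCast hM
  obtain ⟨p, hp⟩ := associatedPrimes.nonempty R M
  have mem_support : (⟨p, hp.isPrime⟩ : PrimeSpectrum R) ∈ Module.support R M :=
    Module.mem_support_iff_of_finite.mpr (annihilator_le_of_isAssociatedPrime hp)
  rw [support_of_supportDim_eq_zero R M hM] at mem_support
  obtain rfl : p = maximalIdeal R :=
    le_antisymm (le_maximalIdeal hp.isPrime.ne_top) mem_support
  exact ((isAssociatedPrime_iff_exists_injective_linearMap _ M).mp hp).2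

lemma InjDimLE.of_succ {rs : List R} (hrs : IsRegular R rs) (hdim : ringKrullDim R = rs.length)
    (hn : rs.length ≤ n) (h : InjDimLE R M (n + 1)) : InjDimLE R M n := by
  intro N _ _ _ i hi
  obtain hlt | rfl := Nat.lt_or_eq_of_le (Nat.succ_le_of_lt hi)
  · exact h N i hlt
  refine .of_residueField ?_ fun p _ _ x _ _ ↦ h _ _ (by omega)
  have supportDim_eq_zero :
      Module.supportDim R (R ⧸ (Ideal.ofList rs • ⊤ : Submodule R R)) = 0 := by
    have hadd := Module.supportDim_add_length_eq_supportDim_of_isRegular rs hrs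
    rw [Module.supportDim_self_eq_ringKrullDim, hdim] at hadd
    obtain ⟨d, hd, hadd⟩ := exists_natCast_of_add_natCast_eq hadd
    rw [hd, Nat.add_eq_right.mp hadd, Nat.cast_zero]
  obtain ⟨f, hf⟩ := exists_injective_residueField_of_supportDim_eq_zero supportDim_eq_zero
  refine .left_of_exact hf (Submodule.mkQ_surjective _) (LinearMap.exact_map_mkQ_range f)
    (.quotOfList_left hrs.1 (s := 0) (fun j hj ↦ ?_) (by omega)) (h _ _ (by omega))
  obtain ⟨j, rfl⟩ := Nat.exists_eq_succ_of_ne_zero hj.ne'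
  exact .of_projective j

lemma injDimLE_length_of_hasFiniteInjDim {rs : List R} (hrs : IsRegular R rs)
    (hdim : ringKrullDim R = rs.length) (h : Module.HasFiniteInjDim R M) :
    InjDimLE R M rs.length := by
  obtain ⟨n, hn⟩ := exists_injDimLE_of_hasFiniteInjDim h
  have h_max : InjDimLE R M (max n rs.length) :=
    fun N _ _ _ i hi ↦ hn N i ((le_max_left _ _).trans_lt hi)
  exact Nat.decreasingInduction' (P := InjDimLE R M) (fun k _ hk ↦ .of_succ hrs hdim hk)
    (le_max_right _ _) h_max

lemma InjDimLE.extVanish_of_isWeaklyRegular (hM : InjDimLE R M n) [Module.Finite R N]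
    {rs : List R} (hrs : IsWeaklyRegular N rs) (hmem : ∀ r ∈ rs, r ∈ maximalIdeal R) {i : ℕ}
    (hi : n < i + rs.length) : ExtVanish R N M i := by
  induction rs generalizing N i with
  | nil => exact hM N i hi
  | cons x rs ih =>
    rw [isWeaklyRegular_cons_iff] at hrs
    rw [List.forall_mem_cons] at hmem
    rw [List.length_cons] at hi
    exact .of_quotSMulTop_left hmem.1 hrs.1 (ih hrs.2 hmem.2 (by omega))

lemma InjDimLE.extVanish_of_depthGE (hM : InjDimLE R M n) [Module.Finite R N] {t i : ℕ}
    (hN : DepthGE R N t) (hi : n < i + t) : ExtVanish R N M i := by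
  obtain _ | _ := subsingleton_or_nontrivial N
  · exact .of_subsingleton_left i
  · obtain ⟨rs, rfl, hmem, hrs⟩ := hN.exists_isRegular
    exact hM.extVanish_of_isWeaklyRegular hrs.1 hmem hi

end InjectiveDimension

section HomQuotient

variable {R : Type u} [CommRing R] {M N : Type u} [AddCommGroup M] [Module R M]
  [AddCommGroup N] [Module R N]

lemma ker_compRight_mkQ {x : R} (hx : IsSMulRegular M x) :
    LinearMap.ker (LinearMap.compRight R (M := N) (Submodule.mkQ (x • ⊤ : Submodule R M))) =
      x • ⊤ := by
  refine le_antisymm (fun f hf ↦ ?_) ?_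
  · have mem_range (n : N) : f n ∈ LinearMap.range (LinearMap.lsmul R M x) := by
      rw [(LinearMap.exact_lsmul_mkQ_smul_top M x).linearMap_ker_eq.symm]
      exact LinearMap.congr_fun hf n
    let e := LinearEquiv.ofInjective (LinearMap.lsmul R M x) hx
    refine ⟨e.symm ∘ₗ f.codRestrict _ mem_range, Submodule.mem_top, LinearMap.ext fun n ↦ ?_⟩
    exact congrArg Subtype.val (e.apply_symm_apply ⟨f n, mem_range n⟩)
  · rintro _ ⟨f, -, rfl⟩
    exact LinearMap.ext fun n ↦ (Submodule.Quotient.mk_eq_zero _).mpr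
      (Submodule.smul_mem_pointwise_smul _ _ _ Submodule.mem_top)

lemma surjective_compRight_mkQ {x : R} (hx : IsSMulRegular M x) (h : ExtVanish R N M 1) :
    Function.Surjective
      (LinearMap.compRight R (M := N) (Submodule.mkQ (x • ⊤ : Submodule R M))) := by
  intro f
  obtain ⟨z, hz⟩ := Ext.covariant_sequence_exact₃ (ModuleCat.of R N) (shortExact_lsmul hx)
    (Ext.mk₀ (ModuleCat.ofHom f)) (zero_add 1) (extVanish_iff.mp h _)
  obtain ⟨g, rfl⟩ := (Ext.mk₀_bijective _ _).2 z
  rw [Ext.mk₀_comp_mk₀] at hz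
  exact ⟨g.hom, congrArg ModuleCat.Hom.hom ((Ext.mk₀_bijective _ _).1 hz)⟩

lemma map_ideal_smul_top (e : M ≃ₗ[R] N) (I : Ideal R) :
    Submodule.map (e : M →ₗ[R] N) (I • ⊤) = I • ⊤ := by
  rw [Submodule.map_smul'', Submodule.map_top, LinearEquiv.range]

lemma exists_quotientLinearMapEquiv {rs : List R} (hrs : IsWeaklyRegular M rs)
    (h : ∀ i, ExtVanish R N M (i + 1)) :
    ∃ e : ((N →ₗ[R] M) ⧸ (Ideal.ofList rs • ⊤ : Submodule R (N →ₗ[R] M))) ≃ₗ[R]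
        (N →ₗ[R] M ⧸ (Ideal.ofList rs • ⊤ : Submodule R M)),
      ∀ f n, e (Submodule.Quotient.mk f) n = Submodule.Quotient.mk (f n) := by
  induction rs generalizing M with
  | nil =>
    let e := Submodule.quotEquivOfEqBot (Ideal.ofList ([] : List R) • ⊤ : Submodule R M) (by simp)
    exact ⟨(Submodule.quotEquivOfEqBot _ (by simp)).trans (e.symm.congrRight (M := N)),
      fun _ _ ↦ rfl⟩
  | cons x rs ih =>
    rw [isWeaklyRegular_cons_iff] at hrs
    obtain ⟨e, he⟩ := ih hrs.2 fun i ↦ .quotSMulTop_right hrs.1 (h i) (h (i + 1))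
    let e₁ : QuotSMulTop x (N →ₗ[R] M) ≃ₗ[R] (N →ₗ[R] QuotSMulTop x M) :=
      (Submodule.quotEquivOfEq _ _ (ker_compRight_mkQ hrs.1).symm).trans
        (LinearMap.quotKerEquivOfSurjective _ (surjective_compRight_mkQ hrs.1 (h 0)))
    exact ⟨(Submodule.quotOfListConsSMulTopEquivQuotSMulTopInner (N →ₗ[R] M) x rs).trans
      ((Submodule.Quotient.equiv _ _ e₁ (map_ideal_smul_top e₁ _)).trans (e.trans
        ((Submodule.quotOfListConsSMulTopEquivQuotSMulTopInner M x rs).symm.congrRight (M := N)))),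
      fun f n ↦ congrArg (Submodule.quotOfListConsSMulTopEquivQuotSMulTopInner M x rs).symm
        (he (e₁ (Submodule.Quotient.mk f)) n)⟩

end HomQuotient

section Rees

variable {R : Type u} [CommRing R] {L M : Type u} [AddCommGroup L] [Module R L]
  [AddCommGroup M] [Module R M]

/-- The map `Hom(L, W) → Ext^g(L, M)` given by the Yoneda product with a class in `Ext^g(W, M)`. -/
noncomputable def homToExt {W : Type u} [AddCommGroup W] [Module R W] {g : ℕ}
    (e : Ext (ModuleCat.of R W) (ModuleCat.of R M) g) (L : Type u) [AddCommGroup L] [Module R L] :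
    (L →ₗ[R] W) →ₗ[R] Ext (ModuleCat.of R L) (ModuleCat.of R M) g :=
  e.postcompOfLinear R (ModuleCat.of R L) (zero_add g) ∘ₗ
    (Ext.linearEquiv₀ (R := R)).symm.toLinearMap ∘ₗ
      (ModuleCat.homLinearEquiv (S := R) (M := ModuleCat.of R L)
        (N := ModuleCat.of R W)).symm.toLinearMap

lemma homToExt_apply {W : Type u} [AddCommGroup W] [Module R W] {g : ℕ}
    (e : Ext (ModuleCat.of R W) (ModuleCat.of R M) g) (f : L →ₗ[R] W) :
    homToExt e L f = (Ext.mk₀ (ModuleCat.ofHom f)).comp e (zero_add g) := rfl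

lemma bijective_comp_extClass {x : R} (hx : IsSMulRegular M x)
    (hL : x ∈ Module.annihilator R L) {i : ℕ} (hvan : ExtVanish R L M i) :
    Function.Bijective ((shortExact_lsmul hx).extClass.postcomp (ModuleCat.of R L)
      (rfl : i + 1 = i + 1)) := by
  refine ⟨(injective_iff_map_eq_zero _).mpr fun y hy ↦ ?_, exists_comp_extClass_eq hx hL⟩
  obtain ⟨z, rfl⟩ := Ext.covariant_sequence_exact₃ _ (shortExact_lsmul hx) y rfl hy
  rw [extVanish_iff.mp hvan z, Ext.zero_comp]

-- Rees's theorem; the class is the Yoneda product of the connecting classes of the sequences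
-- `0 → M' → M' → M'/xM' → 0`, where `x` runs through `rs` and `M'` through the partial quotients.
lemma exists_bijective_homToExt {rs : List R} (hrs : IsWeaklyRegular M rs) :
    ∃ e : Ext (ModuleCat.of R (M ⧸ (Ideal.ofList rs • ⊤ : Submodule R M))) (ModuleCat.of R M)
        rs.length, ∀ (L : Type u) [AddCommGroup L] [Module R L],
      Ideal.ofList rs ≤ Module.annihilator R L → Function.Bijective (homToExt e L) := by
  induction rs generalizing M with
  | nil =>
    let φ := Submodule.quotEquivOfEqBot (Ideal.ofList ([] : List R) • ⊤ : Submodule R M) (by simp)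
    refine ⟨Ext.mk₀ φ.toModuleIso.hom, fun L _ _ _ ↦ ?_⟩
    have homToExt_eq : ⇑(homToExt (Ext.mk₀ φ.toModuleIso.hom) L) =
        (Ext.mk₀ ∘ (ModuleCat.homEquiv (M := ModuleCat.of R L) (N := ModuleCat.of R M)).symm) ∘
          φ.congrRight (M := L) :=
      funext fun f ↦ (homToExt_apply _ f).trans (Ext.mk₀_comp_mk₀ _ _)
    exact homToExt_eq ▸ ((Ext.mk₀_bijective _ _).comp (Equiv.bijective _)).comp
      (LinearEquiv.bijective _)
  | cons x rs ih =>
    have hrs' := (isWeaklyRegular_cons_iff M x rs).mp hrs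
    obtain ⟨e, he⟩ := ih hrs'.2
    let φ := Submodule.quotOfListConsSMulTopEquivQuotSMulTopInner M x rs
    let δ := (shortExact_lsmul hrs'.1).extClass
    refine ⟨(Ext.mk₀ φ.toModuleIso.hom).comp (e.comp δ rfl) (zero_add _), fun L _ _ hL ↦ ?_⟩
    have hvan : ExtVanish R L M rs.length := .of_le_annihilator hrs hL (by simp)
    rw [Ideal.ofList_cons, sup_le_iff, Ideal.span_singleton_le_iff_mem] at hL
    have homToExt_eq : ⇑(homToExt ((Ext.mk₀ φ.toModuleIso.hom).comp (e.comp δ rfl)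
        (zero_add _)) L) =
          (δ.postcomp (ModuleCat.of R L) rfl ∘ homToExt e L) ∘ φ.congrRight (M := L) := by
      funext f
      rw [homToExt_apply, Ext.mk₀_comp_mk₀_assoc,
        ← Ext.comp_assoc _ _ _ (zero_add _) rfl (by omega)]
      rfl
    exact homToExt_eq ▸ ((bijective_comp_extClass hrs'.1 hL.1 hvan).comp (he L hL.2)).comp
      (LinearEquiv.bijective _)

lemma nonempty_linearMap_equiv_ext {rs : List R} (hrs : IsWeaklyRegular M rs)
    (hL : Ideal.ofList rs ≤ Module.annihilator R L) :
    Nonempty ((L →ₗ[R] M ⧸ (Ideal.ofList rs • ⊤ : Submodule R M)) ≃ₗ[R]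
      Ext (ModuleCat.of R L) (ModuleCat.of R M) rs.length) := by
  obtain ⟨e, he⟩ := exists_bijective_homToExt hrs
  exact ⟨.ofBijective _ (he L hL)⟩

lemma exists_comp_eq_of_extVanish {rs : List R} (hrs : IsWeaklyRegular M rs) {A B C : Type u}
    [AddCommGroup A] [Module R A] [AddCommGroup B] [Module R B] [AddCommGroup C] [Module R C]
    {f : A →ₗ[R] B} {g : B →ₗ[R] C} (hf : Function.Injective f)
    (hg : Function.Surjective g) (hfg : Function.Exact f g)
    (hB : Ideal.ofList rs ≤ Module.annihilator R B) (hC : ExtVanish R C M (rs.length + 1))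
    (h : A →ₗ[R] M ⧸ (Ideal.ofList rs • ⊤ : Submodule R M)) :
    ∃ h' : B →ₗ[R] M ⧸ (Ideal.ofList rs • ⊤ : Submodule R M), h' ∘ₗ f = h := by
  obtain ⟨e, he⟩ := exists_bijective_homToExt hrs
  obtain ⟨z, hz⟩ := Ext.contravariant_sequence_exact₁ (shortExact_of_exact hf hg hfg) _
    (homToExt e A h) (add_comm 1 _) (extVanish_iff.mp hC _)
  obtain ⟨h', rfl⟩ := (he B hB).2 z
  refine ⟨h', (he A (hB.trans (f.annihilator_le_of_injective hf))).1 ?_⟩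
  rw [← hz, homToExt_apply, homToExt_apply, Ext.mk₀_comp_mk₀_assoc]
  rfl

end Rees

section ExtDuality

variable {R : Type u} [CommRing R] {M N : Type u} [AddCommGroup M] [Module R M]
  [AddCommGroup N] [Module R N]

lemma isSMulRegular_ext {y : R} (hy : IsSMulRegular N y) {j : ℕ}
    (h : ExtVanish R (QuotSMulTop y N) M j) :
    IsSMulRegular (Ext (ModuleCat.of R N) (ModuleCat.of R M) j) y := by
  refine isSMulRegular_iff_right_eq_zero_of_smul.mpr fun z hz ↦ ?_
  obtain ⟨w, rfl⟩ := Ext.contravariant_sequence_exact₂ (shortExact_lsmul hy) _ z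
    ((mk₀_lsmul_comp_ext y z).trans hz)
  rw [extVanish_iff.mp h w, Ext.comp_zero]

lemma ker_precomp_extClass {y : R} (hy : IsSMulRegular N y) (j : ℕ) :
    LinearMap.ker ((shortExact_lsmul hy).extClass.precompOfLinear R (ModuleCat.of R M)
      (add_comm 1 j)) = y • ⊤ := by
  refine le_antisymm (fun z hz ↦ ?_) ?_
  · obtain ⟨w, rfl⟩ := Ext.contravariant_sequence_exact₁ (shortExact_lsmul hy) _ z (add_comm 1 j) hz
    exact (mk₀_lsmul_comp_ext y w).symm ▸ Submodule.smul_mem_pointwise_smul _ _ _ trivial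
  · rintro _ ⟨z, -, rfl⟩
    exact (map_smul _ y z).trans (smul_ext_eq_zero_of_mem_annihilator mem_annihilator_quotSMulTop _)

lemma nonempty_quotSMulTop_ext_equiv {y : R} (hy : IsSMulRegular N y) {j : ℕ}
    (h : ExtVanish R N M (j + 1)) :
    Nonempty (QuotSMulTop y (Ext (ModuleCat.of R N) (ModuleCat.of R M) j) ≃ₗ[R]
      Ext (ModuleCat.of R (QuotSMulTop y N)) (ModuleCat.of R M) (j + 1)) := by
  refine ⟨(Submodule.quotEquivOfEq _ _ (ker_precomp_extClass hy j).symm).trans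
    (LinearMap.quotKerEquivOfSurjective _ fun z ↦ ?_)⟩
  exact Ext.contravariant_sequence_exact₃ (shortExact_lsmul hy) _ z (extVanish_iff.mp h _)
    (add_comm 1 j)

variable [IsLocalRing R] [IsNoetherianRing R] [Module.Finite R M] [Module.Finite R N] {n : ℕ}

lemma isWeaklyRegular_ext (hM : DepthGE R M n) (hinj : InjDimLE R M n) {ys : List R}
    (hys : IsWeaklyRegular N ys) (hmem : ∀ y ∈ ys, y ∈ maximalIdeal R) {j : ℕ}
    (hj : j + ys.length = n) (hdim : Module.supportDim R N ≤ ys.length) :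
    IsWeaklyRegular (Ext (ModuleCat.of R N) (ModuleCat.of R M) j) ys := by
  induction ys generalizing N j with
  | nil => exact .nil R _
  | cons y ys ih =>
    have hvan : ExtVanish R N M (j + 1) :=
      hinj.extVanish_of_isWeaklyRegular hys hmem (by omega)
    rw [isWeaklyRegular_cons_iff] at hys ⊢
    rw [List.forall_mem_cons] at hmem
    rw [List.length_cons] at hj hdim
    have hdim_quot : Module.supportDim R (QuotSMulTop y N) ≤ ys.length := by
      rw [← Module.supportDim_quotSMulTop_succ_eq_supportDim hys.1 hmem.1, Nat.cast_succ,
        ENat.WithBot.add_le_add_one_right_iff] at hdim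
      exact hdim
    obtain ⟨e⟩ := nonempty_quotSMulTop_ext_equiv hys.1 hvan
    exact ⟨isSMulRegular_ext hys.1 (hM.extVanish_of_supportDim_le hdim_quot (by omega)),
      (e.isWeaklyRegular_congr ys).mpr (ih hys.2 hmem.2 (by omega) hdim_quot)⟩

lemma DepthGE.ext (hM : DepthGE R M n) (hinj : InjDimLE R M n) {d j : ℕ} (hN : DepthGE R N d)
    (hdim : Module.supportDim R N ≤ d) (hj : j + d = n) :
    DepthGE R (Ext (ModuleCat.of R N) (ModuleCat.of R M) j) d := by
  obtain _ | _ := subsingleton_or_nontrivial N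
  · have : Subsingleton (Ext (ModuleCat.of R N) (ModuleCat.of R M) j) :=
      ExtVanish.of_subsingleton_left j
    exact fun i _ ↦ .of_subsingleton_right i
  · obtain ⟨ys, rfl, hmem, hys⟩ := hN.exists_isRegular
    exact depthGE_of_isWeaklyRegular (isWeaklyRegular_ext hM hinj hys.1 hmem hj hdim) hmem

end ExtDuality

section Duality

variable {R : Type u} [CommRing R]

lemma annihilator_le_annihilator_linearMap {M N : Type*} [AddCommGroup M] [Module R M]
    [AddCommGroup N] [Module R N] :
    Module.annihilator R M ≤ Module.annihilator R (N →ₗ[R] M) :=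
  fun _ hr ↦ Module.mem_annihilator.mpr fun f ↦
    LinearMap.ext fun n ↦ Module.mem_annihilator.mp hr (f n)

lemma exact_lcomp_rangeRestrict_lcomp {W X : Type*} [AddCommGroup W] [Module R W]
    [AddCommGroup X] [Module R X] {π : W →ₗ[R] X} (hπ : Function.Surjective π) :
    Function.Exact (LinearMap.lcomp R W π)
      (LinearMap.lcomp R W (LinearMap.ker π).subtype).rangeRestrict := by
  intro f
  rw [← LinearMap.exact_lcomp_of_exact_of_surjective W (LinearMap.exact_subtype_ker_map π) hπ f,
    Subtype.ext_iff]
  rfl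

variable [IsLocalRing R]

/-- `W` behaves like a canonical module of `R ⧸ ann W`, where `R ⧸ ann W` is a Cohen–Macaulay ring
of dimension `d`: it is maximal Cohen–Macaulay with only scalar endomorphisms, and the functor
`Hom(-, W)` on modules killed by `ann W` preserves maximal Cohen–Macaulay modules and is exact on
sequences ending in one. -/
structure IsDualizing (R W : Type u) [CommRing R] [IsLocalRing R] [AddCommGroup W] [Module R W]
    (d : ℕ) : Prop where
  supportDim_eq : Module.supportDim R W = d
  depthGE : DepthGE R W d
  surjective_lsmul : Function.Surjective (LinearMap.lsmul R W)
  exists_comp_eq {A B C : Type u} [AddCommGroup A] [Module R A] [AddCommGroup B] [Module R B]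
    [AddCommGroup C] [Module R C] [Module.Finite R C] {f : A →ₗ[R] B} {g : B →ₗ[R] C}
    (hf : Function.Injective f) (hg : Function.Surjective g) (hfg : Function.Exact f g)
    (hB : Module.annihilator R W ≤ Module.annihilator R B) (hC : DepthGE R C d)
    (h : A →ₗ[R] W) : ∃ h' : B →ₗ[R] W, h' ∘ₗ f = h
  depthGE_linearMap {N : Type u} [AddCommGroup N] [Module R N] [Module.Finite R N]
    (hN : Module.annihilator R W ≤ Module.annihilator R N) (h : DepthGE R N d) :
    DepthGE R (N →ₗ[R] W) d

variable {W X : Type u} [AddCommGroup W] [Module R W] [AddCommGroup X] [Module R X]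
  {π : W →ₗ[R] X} {d : ℕ}

lemma IsDualizing.nonempty_quotient_annihilator_equiv_range (hW : IsDualizing R W d)
    (K : Submodule R W) :
    Nonempty ((R ⧸ K.annihilator) ≃ₗ[R] LinearMap.range (LinearMap.lcomp R W K.subtype)) := by
  let φ : R →ₗ[R] K →ₗ[R] W := LinearMap.lcomp R W K.subtype ∘ₗ LinearMap.lsmul R W
  have ker_eq : LinearMap.ker φ = K.annihilator := by
    ext r
    rw [LinearMap.mem_ker, LinearMap.ext_iff, Submodule.mem_annihilator]
    exact Subtype.forall
  have range_eq : LinearMap.range φ = LinearMap.range (LinearMap.lcomp R W K.subtype) :=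
    LinearMap.range_comp_of_range_eq_top _ (LinearMap.range_eq_top.mpr hW.surjective_lsmul)
  exact ⟨Submodule.quotEquivOfEq _ _ ker_eq.symm ≪≫ₗ φ.quotKerEquivRange ≪≫ₗ
    LinearEquiv.ofEq _ _ range_eq⟩

variable [Module.Finite R W]

lemma IsDualizing.depthGE_linearMap_of_surjective (hW : IsDualizing R W d)
    (hπ : Function.Surjective π) (hker : DepthGE R (R ⧸ (LinearMap.ker π).annihilator) d) :
    DepthGE R (X →ₗ[R] W) d := by
  obtain ⟨e⟩ := hW.nonempty_quotient_annihilator_equiv_range (LinearMap.ker π)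
  exact .left_of_exact (LinearMap.lcomp_injective_of_surjective π hπ)
    (LinearMap.lcomp R W (LinearMap.ker π).subtype).surjective_rangeRestrict
    (exact_lcomp_rangeRestrict_lcomp hπ) (hW.depthGE_linearMap le_rfl hW.depthGE)
    (hker.of_linearEquiv e)

variable [IsNoetherianRing R]

lemma IsDualizing.surjective_applyₗ (hW : IsDualizing R W d) (hπ : Function.Surjective π)
    (hker : DepthGE R (R ⧸ (LinearMap.ker π).annihilator) d) :
    Function.Surjective (LinearMap.applyₗ : X →ₗ[R] (X →ₗ[R] W) →ₗ[R] W) := by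
  intro ψ
  obtain ⟨e⟩ := hW.nonempty_quotient_annihilator_equiv_range (LinearMap.ker π)
  obtain ⟨ψ', hψ'⟩ := hW.exists_comp_eq (LinearMap.lcomp_injective_of_surjective π hπ)
    (LinearMap.lcomp R W (LinearMap.ker π).subtype).surjective_rangeRestrict
    (exact_lcomp_rangeRestrict_lcomp hπ)
    annihilator_le_annihilator_linearMap (hker.of_linearEquiv e) ψ
  refine ⟨π (ψ' LinearMap.id), LinearMap.ext fun φ ↦ ?_⟩
  obtain ⟨r, hr⟩ := hW.surjective_lsmul (φ ∘ₗ π)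
  calc φ (π (ψ' LinearMap.id)) = LinearMap.lsmul R W r (ψ' LinearMap.id) := by
        rw [hr, LinearMap.comp_apply]
    _ = ψ' (r • LinearMap.id) := (map_smul ψ' r LinearMap.id).symm
    _ = ψ' (φ ∘ₗ π) := by rw [← hr]; rfl
    _ = ψ φ := LinearMap.congr_fun hψ' φ

variable [Module.Finite R X]

lemma IsDualizing.supportDim_eq_of_injective (hW : IsDualizing R W d) [Nontrivial X]
    {f : X →ₗ[R] W} (hf : Function.Injective f) : Module.supportDim R X = d := by
  refine le_antisymm ((Module.supportDim_le_of_injective f hf).trans hW.supportDim_eq.le) ?_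
  obtain ⟨p, hp⟩ := associatedPrimes.nonempty R X
  exact (hW.depthGE.le_supportDim_quotient (associatedPrimes.subset_of_injective hf hp)).trans
    (supportDim_quotient_le_of_annihilator_le (annihilator_le_of_isAssociatedPrime hp))

lemma IsDualizing.supportDim_quotient_annihilator (hW : IsDualizing R W d) {K : Submodule R W}
    (hK : K ≠ ⊥) :
    Module.supportDim R (R ⧸ K.annihilator) = d := by
  have := Submodule.nontrivial_iff_ne_bot.mpr hK
  rw [Module.supportDim_quotient_eq_ringKrullDim, Submodule.annihilator,
    ← Module.supportDim_eq_ringKrullDim_quotient_annihilator]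
  exact hW.supportDim_eq_of_injective K.subtype_injective

lemma IsDualizing.supportDim_quotient_add_one_le (hW : IsDualizing R W d)
    (hX : Module.annihilator R W ≤ Module.annihilator R X) (hsub : Subsingleton (X →ₗ[R] W))
    {p : Ideal R} (hp : IsAssociatedPrime p X) : Module.supportDim R (R ⧸ p) + 1 ≤ d := by
  obtain ⟨x, hxX, hxW⟩ := IsSMulRegular.subsingleton_linearMap_iff.mp hsub
  have := hp.isPrime
  have hXp := annihilator_le_of_isAssociatedPrime hp
  exact (CanonicalLinkage.supportDim_quotient_add_one_le hxW (hX.trans hXp) (hXp hxX)).trans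
    hW.supportDim_eq.le

lemma IsDualizing.supportDim_eq_of_surjective (hW : IsDualizing R W d)
    (hπ : Function.Surjective π)
    (hann : ¬ (LinearMap.ker π).annihilator ≤ Module.annihilator R W) :
    Module.supportDim R X = d := by
  refine le_antisymm ((Module.supportDim_le_of_surjective π hπ).trans hW.supportDim_eq.le) ?_
  obtain ⟨r, hr, hrW⟩ := SetLike.not_le_iff_exists.mp hann
  obtain ⟨φ, hφ⟩ : ∃ φ : X →ₗ[R] W, φ ∘ₗ π = LinearMap.lsmul R W r := by
    refine (LinearMap.exact_lcomp_of_exact_of_surjective W (LinearMap.exact_subtype_ker_map π) hπ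
      (LinearMap.lsmul R W r)).mp (LinearMap.ext fun k ↦ ?_)
    exact (Submodule.mem_annihilator.mp hr) k k.2
  have : Nontrivial (LinearMap.range φ) := by
    refine Submodule.nontrivial_iff_ne_bot.mpr fun hbot ↦
      hrW (Module.mem_annihilator.mpr fun w ↦ ?_)
    rw [LinearMap.range_eq_bot.mp hbot, LinearMap.zero_comp] at hφ
    exact (LinearMap.congr_fun hφ w).symm
  exact (hW.supportDim_eq_of_injective (LinearMap.range φ).subtype_injective).ge.trans
    (Module.supportDim_le_of_surjective φ.rangeRestrict φ.surjective_rangeRestrict)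

lemma IsDualizing.depthGE_quotient_annihilator_ker (hW : IsDualizing R W d)
    (hπ : Function.Surjective π) (hX : DepthGE R X d) :
    DepthGE R (R ⧸ (LinearMap.ker π).annihilator) d := by
  obtain ⟨e⟩ := hW.nonempty_quotient_annihilator_equiv_range (LinearMap.ker π)
  have ker_inj := (LinearMap.ker π).subtype_injective
  have hexact := LinearMap.exact_subtype_ker_map π
  have range_eq_top : LinearMap.range (LinearMap.lcomp R W (LinearMap.ker π).subtype) = ⊤ :=
    LinearMap.range_eq_top.mpr fun f ↦ hW.exists_comp_eq ker_inj hπ hexact le_rfl hX f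
  have hdual : DepthGE R (LinearMap.ker π →ₗ[R] W) d :=
    hW.depthGE_linearMap (LinearMap.annihilator_le_of_injective _ ker_inj)
      (.left_of_exact ker_inj hπ hexact hW.depthGE hX)
  exact hdual.of_linearEquiv (e ≪≫ₗ LinearEquiv.ofTop _ range_eq_top).symm

lemma IsDualizing.injective_applyₗ (hW : IsDualizing R W d) (hX : Module.supportDim R X = d)
    (hann : Module.annihilator R W ≤ Module.annihilator R X) (hunm : Module.IsUnmixed R X)
    (hsurj : Function.Surjective (LinearMap.applyₗ : X →ₗ[R] (X →ₗ[R] W) →ₗ[R] W))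
    (hdepth : DepthGE R ((X →ₗ[R] W) →ₗ[R] W) d) :
    Function.Injective (LinearMap.applyₗ : X →ₗ[R] (X →ₗ[R] W) →ₗ[R] W) := by
  let ev : X →ₗ[R] (X →ₗ[R] W) →ₗ[R] W := LinearMap.applyₗ
  have ker_inj := (LinearMap.ker ev).subtype_injective
  have dual_ker_subsingleton : Subsingleton (LinearMap.ker ev →ₗ[R] W) := by
    refine subsingleton_of_forall_eq 0 fun f ↦ ?_
    obtain ⟨f', rfl⟩ :=
      hW.exists_comp_eq ker_inj hsurj (LinearMap.exact_subtype_ker_map ev) hann hdepth f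
    exact LinearMap.ext fun x ↦ LinearMap.congr_fun (LinearMap.mem_ker.mp x.2) f'
  refine LinearMap.ker_eq_bot.mp ?_
  by_contra hne
  have : Nontrivial (LinearMap.ker ev) := Submodule.nontrivial_iff_ne_bot.mpr hne
  obtain ⟨p, hp⟩ := associatedPrimes.nonempty R (LinearMap.ker ev)
  have hlt := hW.supportDim_quotient_add_one_le
    (hann.trans (LinearMap.annihilator_le_of_injective _ ker_inj)) dual_ker_subsingleton hp
  rw [Module.supportDim_quotient_eq_ringKrullDim,
    hunm p (associatedPrimes.subset_of_injective ker_inj hp), dim_eq_supportDim, hX] at hlt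
  exact (ENat.WithBot.add_one_le_natCast_iff.mp hlt).false

theorem IsDualizing.depthGE_iff (hW : IsDualizing R W d) (hπ : Function.Surjective π)
    (hX : Module.supportDim R X = d) : DepthGE R X d ↔
      Module.IsUnmixed R X ∧ DepthGE R (R ⧸ (LinearMap.ker π).annihilator) d := by
  refine ⟨fun h ↦ ⟨h.isUnmixed hX, hW.depthGE_quotient_annihilator_ker hπ h⟩,
    fun ⟨hunm, hker⟩ ↦ ?_⟩
  have hann := LinearMap.annihilator_le_of_surjective π hπ
  have hdepth := hW.depthGE_linearMap annihilator_le_annihilator_linearMap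
    (hW.depthGE_linearMap_of_surjective hπ hker)
  have hsurj := hW.surjective_applyₗ hπ hker
  have hinj := hW.injective_applyₗ hX hann hunm hsurj hdepth
  exact hdepth.of_linearEquiv (LinearEquiv.ofBijective _ ⟨hinj, hsurj⟩).symm

end Duality

section CohenMacaulay

variable {R : Type u} [CommRing R] [IsLocalRing R] {M : Type u} [AddCommGroup M] [Module R M]

lemma depthGE_grade [Nontrivial M] : DepthGE R M (Module.grade R (maximalIdeal R) M) := by
  -- If the lengths of regular sequences were unbounded, `Module.grade` would be the junk value `0`.
  obtain h | h := Nat.eq_zero_or_pos (Module.grade R (maximalIdeal R) M)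
  · simp [h, DepthGE]
  · obtain ⟨rs, hlen, hmem, hrs⟩ : Module.grade R (maximalIdeal R) M ∈ {n | ∃ rs : List R,
        rs.length = n ∧ (∀ r ∈ rs, r ∈ maximalIdeal R) ∧ IsRegular M rs} :=
      Nat.sSup_mem ⟨0, [], rfl, by simp, .nil R M⟩
        (by_contra fun hb ↦ h.ne' (Nat.sSup_of_not_bddAbove hb))
    exact hlen ▸ depthGE_of_isWeaklyRegular hrs.1 hmem

variable [IsNoetherianRing R] [Module.Finite R M] {d : ℕ}

lemma DepthGE.grade_eq (h : DepthGE R M d) (hdim : Module.supportDim R M = d) :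
    Module.grade R (maximalIdeal R) M = d := by
  have := nontrivial_of_supportDim_eq_natCast hdim
  obtain ⟨rs, hlen, hmem, hrs⟩ := h.exists_isRegular
  refine IsGreatest.csSup_eq ⟨⟨rs, hlen, hmem, hrs⟩, ?_⟩
  rintro _ ⟨ts, rfl, -, hts⟩
  obtain ⟨e, -, he⟩ := exists_natCast_of_add_natCast_eq
    ((Module.supportDim_add_length_eq_supportDim_of_isRegular ts hts).trans hdim)
  omega

lemma isCM_iff_depthGE (hdim : Module.supportDim R M = d) :
    Module.IsCM R M ↔ DepthGE R M d := by
  have := nontrivial_of_supportDim_eq_natCast hdim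
  have isCM_iff : Module.IsCM R M ↔ Module.grade R (maximalIdeal R) M = d := by
    rw [Module.IsCM, dim_eq_supportDim, hdim]
    exact Nat.cast_inj (R := WithBot ℕ∞)
  exact isCM_iff.trans ⟨fun h ↦ h ▸ depthGE_grade, fun h ↦ h.grade_eq hdim⟩

end CohenMacaulay

section CanonicalModule

lemma mem_maximalIdeal_of_isRegular {R : Type*} [CommRing R] [IsLocalRing R] {rs : List R}
    (hrs : IsRegular R rs) : ∀ r ∈ rs, r ∈ maximalIdeal R := by
  refine fun r hr ↦ le_maximalIdeal (J := Ideal.ofList rs) (fun h ↦ hrs.2 ?_)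
    (Ideal.subset_span hr)
  rw [h, smul_eq_mul, Ideal.mul_top]

variable {R M : Type u} [CommRing R] [AddCommGroup M] [Module R M] {rs : List R}

lemma surjective_lsmul_quotient_ofList (hrs : IsWeaklyRegular M rs)
    (hext : ∀ i, ExtVanish R M M (i + 1)) (hM : Function.Surjective (LinearMap.lsmul R M)) :
    Function.Surjective (LinearMap.lsmul R (M ⧸ (Ideal.ofList rs • ⊤ : Submodule R M))) := by
  intro h
  obtain ⟨e, he⟩ := exists_quotientLinearMapEquiv hrs hext
  obtain ⟨g, hg⟩ := e.surjective (h ∘ₗ Submodule.mkQ _)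
  obtain ⟨f, rfl⟩ := Submodule.Quotient.mk_surjective _ g
  obtain ⟨r, rfl⟩ := hM f
  refine ⟨r, Submodule.linearMap_qext _ ?_⟩
  rw [← hg]
  exact LinearMap.ext fun m ↦ (he (LinearMap.lsmul R M r) m).symm

lemma annihilator_quotient_ofList (hrs : IsWeaklyRegular M rs)
    (hext : ∀ i, ExtVanish R M M (i + 1)) (hM : Function.Bijective (LinearMap.lsmul R M)) :
    Module.annihilator R (M ⧸ (Ideal.ofList rs • ⊤ : Submodule R M)) = Ideal.ofList rs := by
  refine le_antisymm ?_ (le_annihilator_quotient_smul_top _)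
  obtain ⟨e, -⟩ := exists_quotientLinearMapEquiv hrs hext
  let e' := Submodule.Quotient.equiv (Ideal.ofList rs • ⊤ : Ideal R) _
    (LinearEquiv.ofBijective (LinearMap.lsmul R M) hM) (map_ideal_smul_top _ _)
  calc Module.annihilator R (M ⧸ (Ideal.ofList rs • ⊤ : Submodule R M))
      ≤ Module.annihilator R (R ⧸ (Ideal.ofList rs • ⊤ : Ideal R)) := by
        rw [(e' ≪≫ₗ e).annihilator_eq]
        exact annihilator_le_annihilator_linearMap
    _ = Ideal.ofList rs := by rw [Ideal.annihilator_quotient, smul_eq_mul, Ideal.mul_top]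

variable [IsLocalRing R] [IsNoetherianRing R] [Module.Finite R M] {n d : ℕ}

lemma DepthGE.isWeaklyRegular_of_isRegular (hM : DepthGE R M n) (hdim : ringKrullDim R = n)
    (hrs : IsRegular R rs) : IsWeaklyRegular M rs := by
  refine hM.isWeaklyRegular (N := R) (fun p _ ↦ ?_)
    ((Module.supportDim_self_eq_ringKrullDim R).trans hdim).le hrs.1
    (mem_maximalIdeal_of_isRegular hrs)
  rw [Module.mem_support_iff_of_finite, Module.annihilator_eq_bot.mpr inferInstance]
  exact bot_le

lemma isDualizing_quotient_ofList (hdim : ringKrullDim R = n) (hM : DepthGE R M n)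
    (hinj : InjDimLE R M n) (hend : Function.Bijective (LinearMap.lsmul R M))
    (hrs : IsRegular R rs) (hd : d + rs.length = n) :
    IsDualizing R (M ⧸ (Ideal.ofList rs • ⊤ : Submodule R M)) d := by
  have hrsM := hM.isWeaklyRegular_of_isRegular hdim hrs
  have hext (i : ℕ) : ExtVanish R M M (i + 1) := hinj.extVanish_of_depthGE hM (by omega)
  have hann := annihilator_quotient_ofList hrsM hext hend
  have supportDim_eq : Module.supportDim R (M ⧸ (Ideal.ofList rs • ⊤ : Submodule R M)) = d := by
    rw [Module.supportDim_eq_ringKrullDim_quotient_annihilator, hann,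
      ← ENat.WithBot.add_natCast_cancel (c := rs.length),
      ringKrullDim_add_length_eq_ringKrullDim_of_isRegular rs hrs, hdim, ← hd, Nat.cast_add]
  exact
    { supportDim_eq
      depthGE := .quotOfList hrsM (hd ▸ hM)
      surjective_lsmul := surjective_lsmul_quotient_ofList hrsM hext hend.2
      exists_comp_eq hf hg hfg hB hC :=
        exists_comp_eq_of_extVanish hrsM hf hg hfg (hann ▸ hB)
          (hinj.extVanish_of_depthGE hC (by omega))
      depthGE_linearMap {N} _ _ _ hN h := by
        obtain ⟨e⟩ := nonempty_linearMap_equiv_ext hrsM (hann ▸ hN)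
        have hNd := (supportDim_le_of_annihilator_le hN).trans_eq supportDim_eq
        exact (hM.ext hinj h hNd (by omega)).of_linearEquiv e.symm }

lemma exists_isDualizing_quotient_ofList
    (hCM : (Module.grade R (maximalIdeal R) R : WithBot (WithTop ℕ)) = ringKrullDim R)
    (hM : IsCanonicalModule R M) (hrs : IsRegular R rs) :
    ∃ d, IsDualizing R (M ⧸ (Ideal.ofList rs • ⊤ : Submodule R M)) d ∧
      Module.annihilator R (M ⧸ (Ideal.ofList rs • ⊤ : Submodule R M)) = Ideal.ofList rs := by
  obtain ⟨-, hinj, hgrade, hend⟩ := hM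
  have := hend.1.nontrivial
  have : Nontrivial M := not_subsingleton_iff_nontrivial.mp fun _ ↦
    not_subsingleton (M →ₗ[R] M) inferInstance
  obtain ⟨ts, hts_len, -, hts⟩ := (depthGE_grade (R := R) (M := R)).exists_isRegular
  have hdim : ringKrullDim R = ts.length := hts_len ▸ hCM.symm
  have grade_eq : Module.grade R (maximalIdeal R) M = ts.length :=
    Nat.cast_inj (R := WithBot ℕ∞).mp (hgrade.trans hdim)
  obtain ⟨d, -, hd⟩ := exists_natCast_of_add_natCast_eq
    ((ringKrullDim_add_length_eq_ringKrullDim_of_isRegular rs hrs).trans hdim)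
  have hdepth : DepthGE R M ts.length := grade_eq ▸ depthGE_grade
  have hinj := injDimLE_length_of_hasFiniteInjDim hts hdim hinj
  exact ⟨d, isDualizing_quotient_ofList hdim hdepth hinj hend hrs hd,
    annihilator_quotient_ofList (hdepth.isWeaklyRegular_of_isRegular hdim hrs)
      (fun i ↦ hinj.extVanish_of_depthGE hdepth (by omega)) hend⟩

end CanonicalModule

section Linkage

variable {R M : Type*} [CommRing R] [AddCommGroup M] [Module R M]

lemma annihilator_ideal_smul_top (a : Ideal R) :
    (a • ⊤ : Submodule R M).annihilator =
      (Module.annihilator R M : Submodule R R).colonBy a := by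
  ext r
  rw [Submodule.mem_annihilator', Submodule.smul_le]
  simp only [Submodule.colonBy, Submodule.mem_iInf, Submodule.mem_comap, LinearMap.lsmul_apply,
    Module.mem_annihilator]
  refine forall₂_congr fun x _ ↦ ⟨fun h m ↦ ?_, fun h m _ ↦ ?_⟩
  · rw [smul_eq_mul, mul_comm, mul_smul]
    exact h m trivial
  · have := h m
    rwa [smul_eq_mul, mul_comm, mul_smul] at this

lemma ker_factor {p q : Submodule R M} (h : p ≤ q) :
    LinearMap.ker (Submodule.factor h) = q.map p.mkQ := by
  rw [Submodule.factor, Submodule.ker_mapQ, Submodule.comap_id]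

end Linkage

end CanonicalLinkage

/-- Let `R` be a Cohen–Macaulay local ring with canonical module `ω`, and let
`I ⊆ a ∩ b` be generated by an `R`-regular sequence with `a ≠ I`, `b ≠ I`, and
`I :_R a = b`.  Then `ω/aω` is Cohen–Macaulay iff `ω/aω` is unmixed and `R/b` is
Cohen–Macaulay. -/
theorem canonical_quot_cm_iff {R ω : Type u} [CommRing R] [IsLocalRing R] [IsNoetherianRing R]
    [AddCommGroup ω] [Module R ω] [Module.Finite R ω]
    (hCM : (Module.grade R (maximalIdeal R) R : WithBot (WithTop ℕ)) = ringKrullDim R)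
    (hω : IsCanonicalModule R ω)
    (a b I : Ideal R) (hIab : I ≤ a ⊓ b)
    (hreg : ∃ rs : List R, I = Ideal.ofList rs ∧ RingTheory.Sequence.IsRegular R rs)
    (haI : a ≠ I) (hbI : b ≠ I)
    (hcolon : (I : Submodule R R).colonBy a = b) :
    Module.IsCM R (ω ⧸ (a • ⊤ : Submodule R ω)) ↔
      (Module.IsUnmixed R (ω ⧸ (a • ⊤ : Submodule R ω)) ∧
        Module.IsCM R (R ⧸ b)) := by
  obtain ⟨rs, rfl, hrs⟩ := hreg
  obtain ⟨d, hW, hann⟩ := CanonicalLinkage.exists_isDualizing_quotient_ofList hCM hω hrs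
  have hle : (Ideal.ofList rs • ⊤ : Submodule R ω) ≤ a • ⊤ :=
    Submodule.smul_mono_left (hIab.trans inf_le_left)
  have hker : LinearMap.ker (Submodule.factor hle) = a • ⊤ := by
    rw [CanonicalLinkage.ker_factor, Submodule.map_smul'', Submodule.map_top, Submodule.range_mkQ]
  have hker_ann : (LinearMap.ker (Submodule.factor hle)).annihilator = b := by
    rw [hker, CanonicalLinkage.annihilator_ideal_smul_top, hann, hcolon]
  have hker_ne : LinearMap.ker (Submodule.factor hle) ≠ ⊥ := by
    rw [hker, ne_eq, ← Submodule.le_annihilator_iff, Submodule.annihilator_top, hann]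
    exact fun h ↦ haI (h.antisymm (hIab.trans inf_le_left))
  have hX := hW.supportDim_eq_of_surjective (Submodule.factor_surjective hle) (by
    rw [hker_ann, hann]
    exact fun h ↦ hbI (h.antisymm (hIab.trans inf_le_right)))
  have hRb := hker_ann ▸ hW.supportDim_quotient_annihilator hker_ne
  rw [CanonicalLinkage.isCM_iff_depthGE hX, CanonicalLinkage.isCM_iff_depthGE hRb,
    hW.depthGE_iff (Submodule.factor_surjective hle) hX, hker_ann]
end
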